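/- arXiv:1810.13176 — 9 statements merged into one kernel-verified Lean document; each statement's English description precedes it below -/
import Mathlib

section
/- Let M ≥ 2 and N ≥ 2 be integers. The set of pairs of integers (X,Y) ∈ ℤ² satisfying (X ≥ 0 or Y ≥ 0), Y − X + (M−1) > 0, and 2Y − X − (N−1) < 0 is finite, and its cardinality equals (M+N−2)(M+N−3)/2 + (M−1)(M−2)/2. -/
/-- The region `Q_{M,N}`: integer points `(X,Y)` in the union of the half planes
`X ≥ 0` and `Y ≥ 0` satisfying `Y - X + (M-1) > 0` and `2Y - X - (N-1) < 0`. -/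
def regionQ (M N : ℕ) : Set (ℤ × ℤ) :=
  {z : ℤ × ℤ | (0 ≤ z.1 ∨ 0 ≤ z.2) ∧
    0 < z.2 - z.1 + ((M : ℤ) - 1) ∧
    2 * z.2 - z.1 - ((N : ℤ) - 1) < 0}

/-- The lattice triangle `j < i < n`. -/
def triQ (n : ℕ) : Finset (Σ _ : ℕ, ℕ) := (Finset.range n).sigma (fun i => Finset.range i)

lemma card_triQ (n : ℕ) : (triQ n).card = n * (n - 1) / 2 := by
  simp [triQ, Finset.card_sigma, Finset.sum_range_id]

theorem stmt_0 (M N : ℕ) (hM : 2 ≤ M) (hN : 2 ≤ N) :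
    (regionQ M N).Finite ∧
      (regionQ M N).ncard =
        (M + N - 2) * (M + N - 3) / 2 + (M - 1) * (M - 2) / 2 := by
  classical
  obtain ⟨a, rfl⟩ : ∃ a, M = a + 1 := ⟨M - 1, by omega⟩
  obtain ⟨b, rfl⟩ : ∃ b, N = b + 1 := ⟨N - 1, by omega⟩
  let f : (Σ _ : ℕ, ℕ) → ℤ × ℤ := fun p =>
    (2 * ((a : ℤ) + b - 1 - p.1) - b + 1 + p.2, (a : ℤ) + b - 1 - p.1)
  let g : (Σ _ : ℕ, ℕ) → ℤ × ℤ := fun p => ((p.2 : ℤ), (p.1 : ℤ) - a)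
  have hf : Function.Injective f := by
    rintro ⟨i, j⟩ ⟨k, l⟩ h
    simp only [f, Prod.mk.injEq] at h
    obtain rfl : i = k := by omega
    obtain rfl : j = l := by omega
    rfl
  have hg : Function.Injective g := by
    rintro ⟨i, j⟩ ⟨k, l⟩ h
    simp only [g, Prod.mk.injEq] at h
    obtain rfl : i = k := by omega
    obtain rfl : j = l := by omega
    rfl
  have hd : Disjoint ((triQ (a + b)).image f) ((triQ a).image g) := by
    rw [Finset.disjoint_left]
    intro z hz hz'
    simp only [Finset.mem_image, triQ, Finset.mem_sigma, Finset.mem_range] at hz hz'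
    obtain ⟨⟨i, j⟩, hij, rfl⟩ := hz
    obtain ⟨⟨k, l⟩, hkl, h⟩ := hz'
    simp only [f, g, Prod.mk.injEq] at h hij hkl
    omega
  have key : regionQ (a + 1) (b + 1) =
      (((triQ (a + b)).image f ∪ (triQ a).image g : Finset (ℤ × ℤ)) : Set (ℤ × ℤ)) := by
    ext ⟨x, y⟩
    simp only [regionQ, Set.mem_setOf_eq, Finset.mem_coe, Finset.mem_union, Finset.mem_image,
      triQ, Finset.mem_sigma, Finset.mem_range]
    push_cast
    constructor
    · rintro ⟨h1, h2, h3⟩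
      by_cases hy : 0 ≤ y
      · left
        refine ⟨⟨((a : ℤ) + b - 1 - y).toNat, (x - 2 * y + b - 1).toNat⟩, ?_, ?_⟩
        · dsimp only
          omega
        · simp only [f, Prod.mk.injEq]
          omega
      · right
        refine ⟨⟨(y + a).toNat, x.toNat⟩, ?_, ?_⟩
        · dsimp only
          omega
        · simp only [g, Prod.mk.injEq]
          omega
    · rintro (⟨⟨i, j⟩, hij, h⟩ | ⟨⟨i, j⟩, hij, h⟩)
      · simp only [f, Prod.mk.injEq] at h hij
        omega
      · simp only [g, Prod.mk.injEq] at h hij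
        omega
  rw [key]
  refine ⟨Finset.finite_toSet _, ?_⟩
  rw [Set.ncard_coe_finset, Finset.card_union_of_disjoint hd, Finset.card_image_of_injective _ hf,
    Finset.card_image_of_injective _ hg, card_triQ, card_triQ]
  have e1 : a + 1 + (b + 1) - 2 = a + b := by omega
  have e2 : a + 1 + (b + 1) - 3 = a + b - 1 := by omega
  have e3 : a + 1 - 1 = a := by omega
  have e4 : a + 1 - 2 = a - 1 := by omega
  rw [e1, e2, e3, e4]
end

section
/- Let p, q ∈ 𝒫 and let φ : U → ℂ² be a complex-analytic map on an open neighborhood U of 0 in ℂ² with φ(0) = 0 and differential at 0 equal to the identity, satisfying N_p(φ(z)) = N_q(z) for all z ∈ U. Assume φ is dicritical, meaning: either φ = id near 0, or, letting ν+1 ≥ 2 be the smallest total degree of a nonvanishing homogeneous term of the Taylor expansion of φ − id at 0 and (P,Q) that homogeneous term (a pair of homogeneous polynomials of degree ν+1), the polynomial x·Q(x,y) − y·P(x,y) is identically zero. Then N_p = N_q as polynomials. -/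
open MvPolynomial Asymptotics

/-- The normal form `N_p` as a polynomial in `ℂ[x,y]`. -/
noncomputable def Npoly (M N : ℕ) (a b : ℕ → ℕ → ℂ) : MvPolynomial (Fin 2) ℂ :=
  X 0 * X 1 * (X 1 + X 0 ^ 2) *
    (∏ i ∈ Finset.Icc 1 (N - 1),
      (X 1 + ∑ k ∈ Finset.Icc 1 i, C (a k i) * X 0 * X 1 ^ (k - 1))) *
    (∏ i ∈ Finset.Icc 1 (M - 2),
      (X 1 + ∑ k ∈ Finset.Icc 1 (N - 1 + 2 * i), C (b k i) * X 0 ^ (k + 1)))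

/-- Evaluation of the normal form at a point of `ℂ²`. -/
noncomputable def Nfun (M N : ℕ) (a b : ℕ → ℕ → ℂ) (z : ℂ × ℂ) : ℂ :=
  eval ![z.1, z.2] (Npoly M N a b)

/-- The parameter space `𝒫`. -/
def memP (M N : ℕ) (a b : ℕ → ℕ → ℂ) : Prop :=
  (∀ i ∈ Finset.Icc 1 (N - 1), a 1 i ≠ 0) ∧
  (∀ i ∈ Finset.Icc 1 (M - 2), b 1 i ≠ 0 ∧ b 1 i ≠ 1) ∧
  (∀ i ∈ Finset.Icc 1 (N - 1), ∀ j ∈ Finset.Icc 1 (N - 1), i ≠ j → a 1 i ≠ a 1 j) ∧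
  (∀ i ∈ Finset.Icc 1 (M - 2), ∀ j ∈ Finset.Icc 1 (M - 2), i ≠ j → b 1 i ≠ b 1 j)


/-- `∏ (1 + s α_i(t))` in `ℂ[s][t]`. -/
noncomputable def Apol (N : ℕ) (a : ℕ → ℕ → ℂ) : Polynomial (Polynomial ℂ) :=
  ∏ i ∈ Finset.Icc 1 (N - 1),
    (1 + ∑ k ∈ Finset.Icc 1 i, Polynomial.C (Polynomial.C (a k i) * Polynomial.X) *
      Polynomial.X ^ (k - 1))

/-- The strict transform of the branches tangent to `y = 0`, in `ℂ[s][t]`. -/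
noncomputable def Bpol (M N : ℕ) (b : ℕ → ℕ → ℂ) : Polynomial (Polynomial ℂ) :=
  (1 + Polynomial.C (Polynomial.X ^ 2) * Polynomial.X) * ∏ i ∈ Finset.Icc 1 (M - 2),
    (1 + ∑ k ∈ Finset.Icc 1 (N - 1 + 2 * i),
      Polynomial.C (Polynomial.C (b k i) * Polynomial.X ^ (k + 1)) * Polynomial.X ^ k)

/-- The function `N_p(st,t)/t^d`. -/
noncomputable def Hfun (M N : ℕ) (a b : ℕ → ℕ → ℂ) (w : ℂ × ℂ) : ℂ :=
  w.1 * (∏ i ∈ Finset.Icc 1 (N - 1), (1 + ∑ k ∈ Finset.Icc 1 i, a k i * w.1 * w.2 ^ (k - 1))) *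
    ((1 + w.1 ^ 2 * w.2) * ∏ i ∈ Finset.Icc 1 (M - 2),
      (1 + ∑ k ∈ Finset.Icc 1 (N - 1 + 2 * i), b k i * w.1 ^ (k + 1) * w.2 ^ k))

lemma Nfun_blow (M N : ℕ) (hM : 2 ≤ M) (hN : 2 ≤ N) (a b : ℕ → ℕ → ℂ) (s t : ℂ) :
    Nfun M N a b (s * t, t) = t ^ (M + N) * Hfun M N a b (s, t) := by
  obtain ⟨m, rfl⟩ := Nat.exists_eq_add_of_le hM
  obtain ⟨n, rfl⟩ := Nat.exists_eq_add_of_le hN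
  have h1 : ∀ i ∈ Finset.Icc 1 (2 + n - 1),
      (t + ∑ k ∈ Finset.Icc 1 i, a k i * (s * t) * t ^ (k - 1)) =
      t * (1 + ∑ k ∈ Finset.Icc 1 i, a k i * s * t ^ (k - 1)) := by
    intro i _
    rw [mul_add, Finset.mul_sum, mul_one]
    congr 1
    exact Finset.sum_congr rfl fun k _ => by ring
  have h2 : ∀ i ∈ Finset.Icc 1 (2 + m - 2),
      (t + ∑ k ∈ Finset.Icc 1 (2 + n - 1 + 2 * i), b k i * (s * t) ^ (k + 1)) =
      t * (1 + ∑ k ∈ Finset.Icc 1 (2 + n - 1 + 2 * i), b k i * s ^ (k + 1) * t ^ k) := by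
    intro i _
    rw [mul_add, Finset.mul_sum, mul_one]
    congr 1
    exact Finset.sum_congr rfl fun k _ => by ring
  simp only [Nfun, Npoly, Hfun, map_mul, map_add, map_prod, map_sum, map_pow, eval_X, eval_C,
    Matrix.cons_val_zero, Matrix.cons_val_one]
  rw [Finset.prod_congr rfl h1, Finset.prod_congr rfl h2, Finset.prod_mul_distrib,
    Finset.prod_mul_distrib, Finset.prod_const, Finset.prod_const, Nat.card_Icc, Nat.card_Icc]
  have e1 : 2 + n - 1 + 1 - 1 = n + 1 := by omega
  have e2 : 2 + m - 2 + 1 - 1 = m := by omega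
  rw [e1, e2]
  ring

lemma Hfun_eq (M N : ℕ) (a b : ℕ → ℕ → ℂ) (s t : ℂ) :
    Hfun M N a b (s, t) = Polynomial.eval t
      ((Polynomial.C Polynomial.X * (Apol N a * Bpol M N b)).map (Polynomial.evalRingHom s)) := by
  simp [Hfun, Apol, Bpol, Polynomial.map_prod, Polynomial.map_sum, Polynomial.eval_prod,
    Polynomial.eval_finsetSum, mul_assoc]

lemma Hfun_contDiff (M N : ℕ) (a b : ℕ → ℕ → ℂ) : ContDiff ℂ 1 (Hfun M N a b) := by
  unfold Hfun
  have hA : ContDiff ℂ 1 (fun w : ℂ × ℂ => ∏ i ∈ Finset.Icc 1 (N - 1),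
      (1 + ∑ k ∈ Finset.Icc 1 i, a k i * w.1 * w.2 ^ (k - 1))) := by
    refine contDiff_prod fun i _ => contDiff_const.add (ContDiff.sum fun k _ => ?_)
    fun_prop
  have hB : ContDiff ℂ 1 (fun w : ℂ × ℂ => ∏ i ∈ Finset.Icc 1 (M - 2),
      (1 + ∑ k ∈ Finset.Icc 1 (N - 1 + 2 * i), b k i * w.1 ^ (k + 1) * w.2 ^ k)) := by
    refine contDiff_prod fun i _ => contDiff_const.add (ContDiff.sum fun k _ => ?_)
    fun_prop
  fun_prop

lemma degS_mul {f g : Polynomial (Polynomial ℂ)} {m n : ℕ}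
    (hf : ∀ k, (f.coeff k).natDegree ≤ m) (hg : ∀ k, (g.coeff k).natDegree ≤ n) :
    ∀ k, ((f * g).coeff k).natDegree ≤ m + n := by
  intro k
  rw [Polynomial.coeff_mul]
  refine Polynomial.natDegree_sum_le_of_forall_le _ _ fun x _ => ?_
  exact Polynomial.natDegree_mul_le.trans (add_le_add (hf _) (hg _))

lemma degS_prod {f : ℕ → Polynomial (Polynomial ℂ)} (S : Finset ℕ)
    (hf : ∀ i ∈ S, ∀ k, ((f i).coeff k).natDegree ≤ 1) :
    ∀ k, ((∏ i ∈ S, f i).coeff k).natDegree ≤ S.card := by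
  classical
  induction S using Finset.induction_on with
  | empty => intro k; simp [Polynomial.coeff_one]; split_ifs <;> simp
  | insert i S hi ih =>
    rw [Finset.prod_insert hi, Finset.card_insert_of_notMem hi, add_comm]
    exact degS_mul (hf i (by simp)) (ih fun j hj => hf j (by simp [hj]))

lemma Apol_deg (N : ℕ) (a : ℕ → ℕ → ℂ) (k : ℕ) : ((Apol N a).coeff k).natDegree ≤ N - 1 := by
  have := degS_prod (f := fun i => (1 + ∑ k ∈ Finset.Icc 1 i,
    Polynomial.C (Polynomial.C (a k i) * Polynomial.X) * Polynomial.X ^ (k - 1)))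
    (Finset.Icc 1 (N - 1)) ?_ k
  · simpa [Apol] using this
  · intro i _ k
    rw [Polynomial.coeff_add, Polynomial.finsetSum_coeff]
    refine Polynomial.natDegree_add_le_of_degree_le ?_ ?_
    · rw [Polynomial.coeff_one]; split_ifs <;> simp
    · refine Polynomial.natDegree_sum_le_of_forall_le _ _ fun j _ => ?_
      rw [Polynomial.coeff_C_mul, Polynomial.coeff_X_pow]
      split_ifs
      · rw [mul_one]; exact (Polynomial.natDegree_C_mul_le _ _).trans Polynomial.natDegree_X_le
      · simp

lemma Apol_zero (N : ℕ) (a : ℕ → ℕ → ℂ) (k : ℕ) :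
    ((Apol N a).coeff k).eval 0 = (1 : Polynomial ℂ).coeff k := by
  have : (Apol N a).map (Polynomial.evalRingHom 0) = 1 := by
    simp [Apol, Polynomial.map_prod, Polynomial.map_sum]
  rw [← this, Polynomial.coeff_map]
  rfl

lemma Apol_coeff_zero (N : ℕ) (a : ℕ → ℕ → ℂ) :
    (Apol N a).coeff 0 = ∏ i ∈ Finset.Icc 1 (N - 1),
      (1 + Polynomial.C (a 1 i) * Polynomial.X) := by
  rw [Polynomial.coeff_zero_eq_eval_zero, Apol, Polynomial.eval_prod]
  refine Finset.prod_congr rfl fun i hi => ?_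
  rw [Finset.mem_Icc] at hi
  simp only [Polynomial.eval_add, Polynomial.eval_one, Polynomial.eval_finsetSum,
    Polynomial.eval_mul, Polynomial.eval_C, Polynomial.eval_pow, Polynomial.eval_X]
  congr 1
  rw [Finset.sum_eq_single 1]
  · simp
  · intro k hk hk1
    rw [Finset.mem_Icc] at hk
    rw [zero_pow (by omega), mul_zero]
  · intro h
    simp at h
    omega

lemma Apol_coeff_zero_deg (N : ℕ) (a : ℕ → ℕ → ℂ) (ha : ∀ i ∈ Finset.Icc 1 (N - 1), a 1 i ≠ 0) :
    ((Apol N a).coeff 0).natDegree = N - 1 := by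
  have h1 : ∀ i ∈ Finset.Icc 1 (N - 1),
      (1 + Polynomial.C (a 1 i) * Polynomial.X : Polynomial ℂ).natDegree = 1 := by
    intro i hi
    rw [add_comm, ← Polynomial.C_1]
    exact Polynomial.natDegree_linear (ha i hi)
  rw [Apol_coeff_zero, Polynomial.natDegree_prod, Finset.sum_congr rfl h1]
  · simp
  · intro i hi h0
    have := h1 i hi
    rw [h0] at this
    simp at this

/-- All monomials `s^n t^k` other than the constant term `1` have `n > k`, `k > 0`. -/
def Steep (f : Polynomial (Polynomial ℂ)) : Prop :=
  f.coeff 0 = 1 ∧ ∀ k, Polynomial.X ^ (k + 1) ∣ (f - 1).coeff k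

lemma Steep.mul {f g : Polynomial (Polynomial ℂ)} (hf : Steep f) (hg : Steep g) :
    Steep (f * g) := by
  refine ⟨by rw [Polynomial.mul_coeff_zero, hf.1, hg.1, one_mul], fun k => ?_⟩
  have : f * g - 1 = (f - 1) * (g - 1) + (f - 1) + (g - 1) := by ring
  rw [this, Polynomial.coeff_add, Polynomial.coeff_add]
  refine dvd_add (dvd_add ?_ (hf.2 k)) (hg.2 k)
  rw [Polynomial.coeff_mul]
  refine Finset.dvd_sum fun x hx => ?_
  rw [Finset.HasAntidiagonal.mem_antidiagonal] at hx
  have h1 := mul_dvd_mul (hf.2 x.1) (hg.2 x.2)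
  rw [← pow_add] at h1
  have h2 : k + 1 ≤ x.1 + 1 + (x.2 + 1) := by omega
  exact (pow_dvd_pow _ h2).trans h1

lemma Steep.prod {f : ℕ → Polynomial (Polynomial ℂ)} (S : Finset ℕ)
    (hf : ∀ i ∈ S, Steep (f i)) : Steep (∏ i ∈ S, f i) := by
  classical
  induction S using Finset.induction_on with
  | empty => exact ⟨by simp, fun k => by simp⟩
  | insert i S hi ih =>
    rw [Finset.prod_insert hi]
    exact (hf i (by simp)).mul (ih fun j hj => hf j (by simp [hj]))

lemma Bpol_steep (M N : ℕ) (b : ℕ → ℕ → ℂ) : Steep (Bpol M N b) := by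
  refine Steep.mul ⟨by simp, ?_⟩ (Steep.prod _ ?_)
  · intro k
    rw [add_sub_cancel_left, Polynomial.coeff_C_mul, Polynomial.coeff_X]
    split_ifs with h
    · subst h; simp
    · simp
  · intro i _
    refine ⟨?_, fun k => ?_⟩
    · rw [Polynomial.coeff_add, Polynomial.finsetSum_coeff, Polynomial.coeff_one_zero]
      rw [Finset.sum_eq_zero, add_zero]
      intro j hj
      rw [Finset.mem_Icc] at hj
      rw [Polynomial.coeff_C_mul, Polynomial.coeff_X_pow, if_neg (by omega), mul_zero]
    rw [add_sub_cancel_left, Polynomial.finsetSum_coeff]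
    refine Finset.dvd_sum fun j _ => ?_
    rw [Polynomial.coeff_C_mul, Polynomial.coeff_X_pow]
    split_ifs with h
    · subst h; simp
    · simp

/-- The algebraic core. -/
lemma core_step (A B A' B' : Polynomial (Polynomial ℂ)) (n k : ℕ) (g : Polynomial ℂ)
    (hA0 : (A.coeff 0).natDegree = n) (hA : ∀ j, (A.coeff j).natDegree ≤ n)
    (hA' : ∀ j, (A'.coeff j).natDegree ≤ n)
    (hAz : ∀ j, (A.coeff j).eval 0 = (1 : Polynomial ℂ).coeff j)
    (hAz' : ∀ j, (A'.coeff j).eval 0 = (1 : Polynomial ℂ).coeff j)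
    (hB : Steep B) (hB' : Steep B') (hg : g.natDegree ≤ k)
    (hlA : ∀ j < k, A.coeff j = A'.coeff j) (hlB : ∀ j < k, B.coeff j = B'.coeff j)
    (h : (A' * B').coeff k - (A * B).coeff k = A.coeff 0 * g) :
    A.coeff k = A'.coeff k ∧ B.coeff k = B'.coeff k ∧ g = 0 := by
  obtain ⟨u, hu⟩ : Polynomial.X ^ k ∣ A' - A := by
    rw [Polynomial.X_pow_dvd_iff]
    intro j hj
    rw [Polynomial.coeff_sub, hlA j hj, sub_self]
  obtain ⟨v, hv⟩ : Polynomial.X ^ k ∣ B' - B := by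
    rw [Polynomial.X_pow_dvd_iff]
    intro j hj
    rw [Polynomial.coeff_sub, hlB j hj, sub_self]
  have hu0 : A'.coeff k - A.coeff k = u.coeff 0 := by
    rw [← Polynomial.coeff_sub, hu]
    simpa using Polynomial.coeff_X_pow_mul u k 0
  have hv0 : B'.coeff k - B.coeff k = v.coeff 0 := by
    rw [← Polynomial.coeff_sub, hv]
    simpa using Polynomial.coeff_X_pow_mul v k 0
  have key : u.coeff 0 + A.coeff 0 * v.coeff 0 = A.coeff 0 * g := by
    rw [← h, ← Polynomial.coeff_sub]
    have e : A' * B' - A * B = Polynomial.X ^ k * (u * B' + A * v) := by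
      have e1 : A' = A + Polynomial.X ^ k * u := by rw [← hu]; ring
      have e2 : B = B' - Polynomial.X ^ k * v := by rw [← hv]; ring
      rw [e1, e2]; ring
    have e3 := Polynomial.coeff_X_pow_mul (u * B' + A * v) k 0
    rw [zero_add] at e3
    rw [e, e3, Polynomial.coeff_add, Polynomial.mul_coeff_zero, Polynomial.mul_coeff_zero, hB'.1,
      mul_one]
  have key2 : u.coeff 0 = A.coeff 0 * (g - v.coeff 0) := by
    rw [mul_sub, ← key]; ring
  have hudeg : (u.coeff 0).natDegree ≤ n := by
    rw [← hu0]
    exact (Polynomial.natDegree_sub_le _ _).trans (max_le (hA' k) (hA k))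
  have hueval : (u.coeff 0).eval 0 = 0 := by
    rw [← hu0, Polynomial.eval_sub, hAz, hAz', sub_self]
  have hA00 : (A.coeff 0).eval 0 = 1 := by rw [hAz]; simp
  have hAne : A.coeff 0 ≠ 0 := by
    intro h0
    rw [h0] at hA00
    simp at hA00
  have hgv : g - v.coeff 0 = 0 := by
    by_contra hne
    have hd := Polynomial.natDegree_mul hAne hne
    rw [← key2, hA0] at hd
    have hd0 : (g - v.coeff 0).natDegree = 0 := by omega
    have hC := Polynomial.eq_C_of_natDegree_eq_zero hd0
    have he : (g - v.coeff 0).eval 0 = 0 := by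
      rw [key2, Polynomial.eval_mul, hA00, one_mul] at hueval
      exact hueval
    rw [hC, Polynomial.eval_C] at he
    rw [he, map_zero] at hC
    exact hne hC
  have hu00 : u.coeff 0 = 0 := by rw [key2, hgv, mul_zero]
  have hgeq : g = v.coeff 0 := sub_eq_zero.mp hgv
  have hdvd : Polynomial.X ^ (k + 1) ∣ g := by
    rw [hgeq, ← hv0]
    have := dvd_sub (hB'.2 k) (hB.2 k)
    rw [← Polynomial.coeff_sub] at this
    rw [← Polynomial.coeff_sub]
    convert this using 2
    ring
  have hg0 : g = 0 := by
    refine Polynomial.eq_zero_of_dvd_of_natDegree_lt hdvd ?_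
    rw [Polynomial.natDegree_X_pow]
    omega
  refine ⟨?_, ?_, hg0⟩
  · rw [hu00] at hu0
    exact (sub_eq_zero.mp hu0).symm
  · rw [← hgeq, hg0] at hv0
    exact (sub_eq_zero.mp hv0).symm

lemma poly_littleO (F : Polynomial ℂ) (n : ℕ)
    (h : (fun t : ℂ => F.eval t) =o[nhdsWithin 0 {0}ᶜ] (fun t : ℂ => t ^ n)) :
    ∀ k ≤ n, F.coeff k = 0 := by
  intro k
  induction k using Nat.strong_induction_on with
  | _ k ih =>
    intro hk
    obtain ⟨G, rfl⟩ : Polynomial.X ^ k ∣ F := by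
      rw [Polynomial.X_pow_dvd_iff]
      intro j hj
      exact ih j hj (by omega)
    have h2 : (fun t : ℂ => G.eval t) =o[nhdsWithin 0 {0}ᶜ] (fun _ : ℂ => (1 : ℂ)) := by
      have h3 : (fun t : ℂ => t ^ k * G.eval t) =o[nhdsWithin 0 {0}ᶜ] (fun t : ℂ => t ^ k) := by
        simp only [Polynomial.eval_mul, Polynomial.eval_pow, Polynomial.eval_X] at h
        refine h.trans_isBigO ?_
        refine IsBigO.mono ?_ nhdsWithin_le_nhds
        obtain ⟨r, rfl⟩ := Nat.exists_eq_add_of_le hk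
        have : (fun t : ℂ => t ^ r) =O[nhds 0] (fun _ : ℂ => (1 : ℂ)) :=
          ((continuous_pow r).tendsto 0).isBigO_one ℂ
        simpa [pow_add] using (isBigO_refl (fun t : ℂ => t ^ k) (nhds 0)).mul this
      have h4 := (isBigO_refl (fun t : ℂ => (t ^ k)⁻¹) (nhdsWithin 0 {0}ᶜ)).mul_isLittleO h3
      refine h4.congr' ?_ ?_
      · filter_upwards [self_mem_nhdsWithin] with t ht
        have ht' : t ≠ 0 := ht
        field_simp
      · filter_upwards [self_mem_nhdsWithin] with t ht
        have ht' : t ≠ 0 := ht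
        field_simp
    have h5 := (isLittleO_one_iff ℂ).mp h2
    have h6 : Filter.Tendsto (fun t : ℂ => G.eval t) (nhdsWithin 0 {0}ᶜ) (nhds (G.eval 0)) :=
      (G.continuous.tendsto 0).mono_left nhdsWithin_le_nhds
    have h7 := tendsto_nhds_unique h6 h5
    have h8 := Polynomial.coeff_X_pow_mul G k 0
    rw [zero_add] at h8
    rw [h8, Polynomial.coeff_zero_eq_eval_zero, h7]

lemma hom_eval {P : MvPolynomial (Fin 2) ℂ} {n : ℕ} (hP : P.IsHomogeneous n) (s t : ℂ) :
    eval ![s * t, t] P = t ^ n * eval ![s, 1] P := by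
  rw [eval_eq', eval_eq', Finset.mul_sum]
  refine Finset.sum_congr rfl fun d hd => ?_
  have hdeg : d 0 + d 1 = n := by
    have := hP (mem_support_iff.mp hd)
    rw [Finsupp.weight_apply, Finsupp.sum_fintype _ _ (by simp)] at this
    simpa using this
  simp only [Fin.prod_univ_two, Matrix.cons_val_zero, Matrix.cons_val_one]
  rw [← hdeg]
  ring

lemma aeval_dehom (P : MvPolynomial (Fin 2) ℂ) (s : ℂ) :
    (aeval ![(Polynomial.X : Polynomial ℂ), 1] P).eval s = eval ![s, 1] P := by
  induction P using MvPolynomial.induction_on with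
  | C c => simp
  | add p q hp hq => simp [hp, hq]
  | mul_X p i hp => fin_cases i <;> simp [hp]

lemma aeval_deg {P : MvPolynomial (Fin 2) ℂ} {n : ℕ} (hP : P.IsHomogeneous n) :
    (aeval ![(Polynomial.X : Polynomial ℂ), 1] P).natDegree ≤ n := by
  have := aeval_natDegree_le (n := 1) P hP.totalDegree_le ![(Polynomial.X : Polynomial ℂ), 1] ?_
  · simpa using this
  · intro i
    fin_cases i <;> simp

lemma hom_zero {P : MvPolynomial (Fin 2) ℂ} {n : ℕ} (hP : P.IsHomogeneous n)
    (h : aeval ![(Polynomial.X : Polynomial ℂ), 1] P = 0) : P = 0 := by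
  have : P * X 1 = 0 := by
    refine MvPolynomial.funext fun x => ?_
    rw [map_mul, eval_X, map_zero]
    by_cases hx : x 1 = 0
    · rw [hx, mul_zero]
    · have e : x = ![(x 0 / x 1) * x 1, x 1] := by
        ext i
        fin_cases i
        · simp [div_mul_cancel₀ _ hx]
        · simp
      rw [e, hom_eval hP, ← aeval_dehom, h]
      simp
  exact (mul_eq_zero.mp this).resolve_right (X_ne_zero _)

lemma asym (M N : ℕ) (hM : 2 ≤ M) (hN : 2 ≤ N) (a b a' b' : ℕ → ℕ → ℂ)
    (U : Set (ℂ × ℂ)) (hU : IsOpen U) (h0U : (0 : ℂ × ℂ) ∈ U)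
    (φ : ℂ × ℂ → ℂ × ℂ)
    (hconj : ∀ z ∈ U, Nfun M N a b (φ z) = Nfun M N a' b' z)
    (ν : ℕ) (hν : 1 ≤ ν) (s q : ℂ)
    (he : (fun t : ℂ => φ (s * t, t) - (s * t, t) - (t ^ (ν + 1) * (s * q), t ^ (ν + 1) * q))
      =o[nhdsWithin 0 {0}ᶜ] (fun t : ℂ => t ^ (ν + 1))) :
    (fun t : ℂ => Hfun M N a' b' (s, t) - Hfun M N a b (s, t)
      - (M + N : ℕ) * q * Hfun M N a b (s, 0) * t ^ ν) =o[nhdsWithin 0 {0}ᶜ]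
      (fun t : ℂ => t ^ ν) := by
  set l : Filter ℂ := nhdsWithin 0 {0}ᶜ with hl
  have hne : ∀ᶠ t in l, t ≠ 0 := self_mem_nhdsWithin
  have ht0 : Filter.Tendsto (fun t : ℂ => t) l (nhds 0) :=
    Filter.tendsto_id.mono_left nhdsWithin_le_nhds
  have hpow0 : Filter.Tendsto (fun t : ℂ => t ^ ν) l (nhds 0) := by
    have := ht0.pow ν
    rwa [zero_pow (by omega)] at this
  -- the two error terms, divided by `t`
  obtain ⟨e1, he1⟩ : ∃ e1 : ℂ → ℂ, e1 = fun t =>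
    ((φ (s * t, t)).1 - s * t - t ^ (ν + 1) * (s * q)) / t := ⟨_, rfl⟩
  obtain ⟨e2, he2⟩ : ∃ e2 : ℂ → ℂ, e2 = fun t =>
    ((φ (s * t, t)).2 - t - t ^ (ν + 1) * q) / t := ⟨_, rfl⟩
  have hdiv : ∀ f : ℂ → ℂ, f =o[l] (fun t : ℂ => t ^ (ν + 1)) →
      (fun t => f t / t) =o[l] (fun t : ℂ => t ^ ν) := by
    intro f hf
    have h4 := hf.mul_isBigO (isBigO_refl (fun t : ℂ => t⁻¹) l)
    refine h4.congr' ?_ ?_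
    · exact Filter.Eventually.of_forall fun t => (div_eq_mul_inv _ _).symm
    · filter_upwards [hne] with t ht
      rw [pow_succ, mul_assoc, mul_inv_cancel₀ ht, mul_one]
  have ho1 : e1 =o[l] (fun t : ℂ => t ^ ν) := by
    rw [he1]
    refine hdiv _ (IsBigO.trans_isLittleO ?_ he)
    exact isBigO_fst_prod' (f' := fun t : ℂ =>
      φ (s * t, t) - (s * t, t) - (t ^ (ν + 1) * (s * q), t ^ (ν + 1) * q))
  have ho2 : e2 =o[l] (fun t : ℂ => t ^ ν) := by
    rw [he2]
    refine hdiv _ (IsBigO.trans_isLittleO ?_ he)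
    exact isBigO_snd_prod' (f' := fun t : ℂ =>
      φ (s * t, t) - (s * t, t) - (t ^ (ν + 1) * (s * q), t ^ (ν + 1) * q))
  obtain ⟨h, hh⟩ : ∃ h : ℂ → ℂ, h = fun t => q * t ^ ν + e2 t := ⟨_, rfl⟩
  have hhO : h =O[l] (fun t : ℂ => t ^ ν) := by
    rw [hh]
    exact ((isBigO_refl _ _).const_mul_left q).add ho2.isBigO
  have hh0 : Filter.Tendsto h l (nhds 0) := hhO.trans_tendsto hpow0
  have hh1 : Filter.Tendsto (fun t => 1 + h t) l (nhds 1) := by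
    simpa using hh0.const_add 1
  have hh1ne : ∀ᶠ t in l, 1 + h t ≠ 0 := hh1.eventually_ne one_ne_zero
  have hinv : (fun t => (1 + h t)⁻¹) =O[l] (fun _ : ℂ => (1 : ℂ)) :=
    (hh1.inv₀ one_ne_zero).isBigO_one ℂ
  obtain ⟨σ, hσ⟩ : ∃ σ : ℂ → ℂ, σ = fun t => s + (e1 t - s * e2 t) * (1 + h t)⁻¹ := ⟨_, rfl⟩
  have hσo : (fun t => σ t - s) =o[l] (fun t : ℂ => t ^ ν) := by
    have := (ho1.sub (ho2.const_mul_left s)).mul_isBigO hinv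
    simpa [hσ] using this
  obtain ⟨η, hη⟩ : ∃ η : ℂ → ℂ, η = fun t => t * (1 + h t) := ⟨_, rfl⟩
  have hηo : (fun t => η t - t) =o[l] (fun t : ℂ => t ^ ν) := by
    have h1 : (fun t : ℂ => t) =o[l] (fun _ : ℂ => (1 : ℂ)) := (isLittleO_one_iff ℂ).mpr ht0
    have := h1.mul_isBigO hhO
    refine this.congr (fun t => ?_) (fun t => one_mul _)
    rw [hη]; ring
  have hpair : (fun t => ((σ t, η t) : ℂ × ℂ) - (s, t)) =o[l] (fun t : ℂ => t ^ ν) :=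
    hσo.prod_left hηo
  have hst : Filter.Tendsto (fun t : ℂ => ((s, t) : ℂ × ℂ)) l (nhds (s, 0)) :=
    tendsto_const_nhds.prodMk_nhds ht0
  have hση : Filter.Tendsto (fun t => ((σ t, η t) : ℂ × ℂ)) l (nhds (s, 0)) := by
    have := (hpair.isBigO.trans_tendsto hpow0).add hst
    simpa using this
  have hstrict := (Hfun_contDiff M N a b).contDiffAt (x := ((s, 0) : ℂ × ℂ)) |>.hasStrictFDerivAt
    (by simp)
  have hcont := (Hfun_contDiff M N a b).continuous.tendsto ((s, 0) : ℂ × ℂ)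
  have hHdiff : (fun t => Hfun M N a b (σ t, η t) - Hfun M N a b (s, t)) =o[l]
      (fun t : ℂ => t ^ ν) :=
    (hstrict.isBigO_sub.comp_tendsto (hση.prodMk_nhds hst)).trans_isLittleO hpair
  have hH1 : (fun t => Hfun M N a b (σ t, η t)) =O[l] (fun _ : ℂ => (1 : ℂ)) :=
    (hcont.comp hση).isBigO_one ℂ
  have hH2 : (fun t => Hfun M N a b (s, t)) =O[l] (fun _ : ℂ => (1 : ℂ)) :=
    (hcont.comp hst).isBigO_one ℂ
  have hH3 : (fun t => Hfun M N a b (s, t) - Hfun M N a b (s, 0)) =o[l] (fun _ : ℂ => (1 : ℂ)) := by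
    rw [isLittleO_one_iff]
    have := (hcont.comp hst).sub_const (Hfun M N a b (s, 0))
    simpa using this
  have hbin : (fun t => (1 + h t) ^ (M + N) - 1 - (M + N : ℕ) * h t) =o[l]
      (fun t : ℂ => t ^ ν) := by
    have hd := hasDerivAt_iff_isLittleO_nhds_zero.mp (hasDerivAt_pow (M + N) (1 : ℂ))
    have := (hd.comp_tendsto hh0).trans_isBigO hhO
    refine this.congr_left fun t => ?_
    simp [mul_comm]
  have hlin : (fun t => 1 + (M + N : ℕ) * h t) =O[l] (fun _ : ℂ => (1 : ℂ)) :=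
    ((hh0.const_mul ((M + N : ℕ) : ℂ)).const_add 1).isBigO_one ℂ
  have T1 := hbin.mul_isBigO hH1
  have T2 := hlin.mul_isLittleO hHdiff
  have T3 := (ho2.const_mul_left ((M + N : ℕ) : ℂ)).mul_isBigO hH2
  have T4 := ((isBigO_refl (fun t : ℂ => t ^ ν) l).const_mul_left
    (((M + N : ℕ) : ℂ) * q)).mul_isLittleO hH3
  simp only [mul_one, one_mul] at T1 T2 T3 T4
  have T := ((T1.add T2).add T3).add T4
  refine T.congr' ?_ (Filter.EventuallyEq.refl _ _)
  have hin : ∀ᶠ t in l, ((s * t, t) : ℂ × ℂ) ∈ U := by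
    have : Filter.Tendsto (fun t : ℂ => ((s * t, t) : ℂ × ℂ)) l (nhds 0) := by
      have := (ht0.const_mul s).prodMk_nhds ht0
      rwa [mul_zero] at this
    exact this.eventually (hU.mem_nhds h0U)
  filter_upwards [hne, hh1ne, hin] with t ht h1 hinU
  have hy : (φ (s * t, t)).2 = η t := by
    rw [hη, hh, he2]
    field_simp
    ring
  have hx : (φ (s * t, t)).1 = σ t * η t := by
    have : σ t * η t = s * η t + (e1 t - s * e2 t) * t := by
      rw [hσ, hη]
      field_simp
    rw [this, hη, hh, he1, he2]
    field_simp
    ring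
  have hmain := hconj _ hinU
  have hφ : φ (s * t, t) = (σ t * η t, η t) := Prod.ext hx hy
  rw [hφ, Nfun_blow M N hM hN, Nfun_blow M N hM hN] at hmain
  have hH : (1 + h t) ^ (M + N) * Hfun M N a b (σ t, η t) = Hfun M N a' b' (s, t) := by
    have hη' : η t = t * (1 + h t) := by rw [hη]
    rw [show η t ^ (M + N) = t ^ (M + N) * (1 + h t) ^ (M + N) by rw [hη', mul_pow],
      mul_assoc] at hmain
    exact mul_left_cancel₀ (pow_ne_zero _ ht) hmain
  rw [← hH, hh]
  ring

/-- If `φ` is a dicritical germ of biholomorphism tangent to the identity with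
`N_p ∘ φ = N_q`, then `N_p = N_q`. Dicritical means: either `φ = id` near `0`, or the
first nonvanishing homogeneous term `(P,Q)` (of degree `ν+1 ≥ 2`) of the Taylor expansion
of `φ - id` at `0` satisfies `x·Q - y·P = 0`. -/
theorem stmt_2 (M N : ℕ) (hM : 2 ≤ M) (hN : 2 ≤ N) (a b a' b' : ℕ → ℕ → ℂ)
    (hp : memP M N a b) (hq : memP M N a' b')
    (U : Set (ℂ × ℂ)) (hU : IsOpen U) (h0U : (0 : ℂ × ℂ) ∈ U)
    (φ : ℂ × ℂ → ℂ × ℂ) (hφan : ∀ z ∈ U, AnalyticAt ℂ φ z) (hφ0 : φ 0 = 0)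
    (hdφ : HasFDerivAt φ (ContinuousLinearMap.id ℂ (ℂ × ℂ)) 0)
    (hconj : ∀ z ∈ U, Nfun M N a b (φ z) = Nfun M N a' b' z)
    (hdic : (∀ᶠ z in nhds (0 : ℂ × ℂ), φ z = z) ∨
      ∃ ν : ℕ, 1 ≤ ν ∧ ∃ P Q : MvPolynomial (Fin 2) ℂ,
        P.IsHomogeneous (ν + 1) ∧ Q.IsHomogeneous (ν + 1) ∧ ¬(P = 0 ∧ Q = 0) ∧
        (fun z : ℂ × ℂ => φ z - z - (eval ![z.1, z.2] P, eval ![z.1, z.2] Q))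
          =o[nhds (0 : ℂ × ℂ)] (fun z : ℂ × ℂ => ‖z‖ ^ (ν + 1)) ∧
        X 0 * Q - X 1 * P = 0) :
    Npoly M N a b = Npoly M N a' b' := by
  rcases hdic with hid | ⟨ν, hν, P, Q, hP, hQ, hPQ, ho, hdic⟩
  · have hev : ∀ᶠ z in nhds (0 : ℂ × ℂ), Nfun M N a b z = Nfun M N a' b' z := by
      filter_upwards [hid, hU.mem_nhds h0U] with z h1 h2
      rw [← hconj z h2, h1]
    obtain ⟨ε, hε, hball⟩ := Metric.eventually_nhds_iff_ball.mp hev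
    refine MvPolynomial.funext_set (fun _ => Metric.ball (0 : ℂ) ε) (fun _ => ?_) fun x hx => ?_
    · exact infinite_of_mem_nhds 0 (Metric.ball_mem_nhds 0 hε)
    · have h0 := hx 0 (Set.mem_univ _)
      have h1 := hx 1 (Set.mem_univ _)
      have := hball (x 0, x 1) (by
        rw [← Prod.mk_zero_zero, ← ball_prod_same]
        exact ⟨h0, h1⟩)
      have hxe : ![x 0, x 1] = x := by
        ext i
        fin_cases i <;> simp
      simpa only [Nfun, hxe] using this
  · exfalso
    set qp : Polynomial ℂ := aeval ![(Polynomial.X : Polynomial ℂ), 1] Q with hqp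
    have hpq : aeval ![(Polynomial.X : Polynomial ℂ), 1] P = Polynomial.X * qp := by
      have := congrArg (aeval ![(Polynomial.X : Polynomial ℂ), 1]) hdic
      simp only [map_sub, map_mul, aeval_X, Matrix.cons_val_zero, Matrix.cons_val_one,
        one_mul, map_zero] at this
      exact (sub_eq_zero.mp this).symm
    suffices hq0 : qp = 0 by
      exact hPQ ⟨hom_zero hP (by rw [hpq, hq0, mul_zero]), hom_zero hQ hq0⟩
    by_contra hqne
    have hqdeg : qp.natDegree ≤ ν := by
      have h1 := aeval_deg hP
      rw [hpq, Polynomial.natDegree_X_mul hqne] at h1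
      omega
    have hPs : ∀ s, eval ![s, 1] P = s * qp.eval s := by
      intro s
      rw [← aeval_dehom, hpq, Polynomial.eval_mul, Polynomial.eval_X]
    have hasy : ∀ s : ℂ, _ := fun s => asym M N hM hN a b a' b' U hU h0U φ hconj ν hν s
      (qp.eval s) (by
        have htend : Filter.Tendsto (fun t : ℂ => ((s * t, t) : ℂ × ℂ)) (nhdsWithin 0 {0}ᶜ)
            (nhds 0) := by
          have : Continuous (fun t : ℂ => ((s * t, t) : ℂ × ℂ)) := by fun_prop
          have := this.tendsto 0
          rw [mul_zero, Prod.mk_zero_zero] at this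
          exact this.mono_left nhdsWithin_le_nhds
        have h1 := ho.comp_tendsto htend
        have h2 : (fun t : ℂ => ‖((s * t, t) : ℂ × ℂ)‖ ^ (ν + 1)) =O[nhdsWithin 0 {0}ᶜ]
            (fun t : ℂ => t ^ (ν + 1)) := by
          refine IsBigO.pow (IsBigO.norm_left ?_) _
          exact ((isBigO_refl _ _).const_mul_left s).prod_left (isBigO_refl _ _)
        refine (h1.trans_isBigO h2).congr_left fun t => ?_
        simp only [Function.comp]
        rw [hom_eval hP, hom_eval hQ, hPs, hqp, aeval_dehom])
    have hcoef : ∀ k ≤ ν, (Apol N a' * Bpol M N b').coeff k - (Apol N a * Bpol M N b).coeff k =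
        (Apol N a).coeff 0 * (if k = ν then Polynomial.C ((M + N : ℕ) : ℂ) * qp else 0) := by
      intro k hk
      refine mul_left_cancel₀ (Polynomial.X_ne_zero (R := ℂ)) (Polynomial.funext fun s => ?_)
      set F : Polynomial ℂ :=
        (Polynomial.C Polynomial.X * (Apol N a' * Bpol M N b')).map (Polynomial.evalRingHom s) -
        (Polynomial.C Polynomial.X * (Apol N a * Bpol M N b)).map (Polynomial.evalRingHom s) -
        Polynomial.C ((M + N : ℕ) * qp.eval s * Hfun M N a b (s, 0)) * Polynomial.X ^ ν with hF
      have hz := poly_littleO F ν (by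
        refine (hasy s).congr_left fun t => ?_
        rw [Hfun_eq, Hfun_eq _ _ _ _ _ t, hF]
        simp only [Polynomial.eval_sub, Polynomial.eval_mul, Polynomial.eval_C,
          Polynomial.eval_pow, Polynomial.eval_X]) k hk
      have hH0 : Hfun M N a b (s, 0) = s * ((Apol N a).coeff 0).eval s := by
        rw [Hfun_eq, ← Polynomial.coeff_zero_eq_eval_zero, Polynomial.coeff_map,
          Polynomial.coeff_C_mul, Polynomial.mul_coeff_zero, (Bpol_steep M N b).1]
        simp
      rw [hF, hH0] at hz
      simp only [Polynomial.coeff_sub, Polynomial.coeff_map, Polynomial.coeff_C_mul,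
        Polynomial.coeff_X_pow, Polynomial.coe_evalRingHom, Polynomial.eval_mul,
        Polynomial.eval_X] at hz
      simp only [Polynomial.eval_mul, Polynomial.eval_sub, Polynomial.eval_X]
      split_ifs at hz ⊢ with hkν
      · simp only [Polynomial.eval_mul, Polynomial.eval_C]
        linear_combination hz
      · simp only [Polynomial.eval_zero]
        linear_combination hz
    have hstep : ∀ k ≤ ν, (Apol N a).coeff k = (Apol N a').coeff k ∧
        (Bpol M N b).coeff k = (Bpol M N b').coeff k ∧
        (if k = ν then Polynomial.C ((M + N : ℕ) : ℂ) * qp else 0) = 0 := by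
      intro k
      induction k using Nat.strong_induction_on with
      | _ k ih =>
        intro hk
        refine core_step _ _ _ _ (N - 1) k _ (Apol_coeff_zero_deg N a hp.1) (Apol_deg N a)
          (Apol_deg N a') (Apol_zero N a) (Apol_zero N a') (Bpol_steep M N b)
          (Bpol_steep M N b') ?_ (fun j hj => (ih j hj (by omega)).1)
          (fun j hj => (ih j hj (by omega)).2.1) (hcoef k hk)
        split_ifs with hkν
        · exact (Polynomial.natDegree_C_mul_le _ _).trans (hkν ▸ hqdeg)
        · simp
    have hfin := (hstep ν le_rfl).2.2
    rw [if_pos rfl, mul_eq_zero, Polynomial.C_eq_zero] at hfin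
    rcases hfin with h1 | h1
    · rw [Nat.cast_eq_zero] at h1
      omega
    · exact hqne h1
end

section
/- Let p and q be parameters, let ν ≥ 1 be an integer, and let φ : U → ℂ² be a complex-analytic map on an open neighborhood U of 0 in ℂ² with φ(0) = 0 such that φ − id vanishes to order at least ν+1 at 0 (all Taylor terms of φ − id of total degree ≤ ν vanish). If N_p(φ(z)) = N_q(z) for all z ∈ U, then every coefficient of N_p − N_q on a monomial of total degree strictly less than M+N+ν vanishes; equivalently, the homogeneous components satisfy N_p^{(M+N+l)} = N_q^{(M+N+l)} for all 0 ≤ l ≤ ν−1. -/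
open MvPolynomial

/-- `P` has order at least `m` at `0`, and composing with `φ` changes it to order `m + ν`. -/
def GoodOrd (φ : ℂ × ℂ → ℂ × ℂ) (ν : ℕ) (P : MvPolynomial (Fin 2) ℂ) (m : ℕ) : Prop :=
  ((fun z : ℂ × ℂ => eval ![z.1, z.2] P) =O[nhds 0] fun z => ‖z‖ ^ m) ∧
  ((fun z : ℂ × ℂ => eval ![(φ z).1, (φ z).2] P - eval ![z.1, z.2] P)
    =O[nhds 0] fun z => ‖z‖ ^ (m + ν))

theorem norm_pow_mono {m n : ℕ} (h : m ≤ n) :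
    (fun z : ℂ × ℂ => ‖z‖ ^ n) =O[nhds 0] fun z => ‖z‖ ^ m := by
  refine Asymptotics.IsBigO.of_bound 1 ?_
  filter_upwards [Metric.ball_mem_nhds (0 : ℂ × ℂ) one_pos] with z hz
  rw [mem_ball_zero_iff] at hz
  rw [one_mul, norm_pow, norm_pow, norm_norm]
  exact pow_le_pow_of_le_one (norm_nonneg _) hz.le h

theorem GoodOrd.mono {φ : ℂ × ℂ → ℂ × ℂ} {ν : ℕ} {P : MvPolynomial (Fin 2) ℂ} {m n : ℕ}
    (h : GoodOrd φ ν P n) (hmn : m ≤ n) : GoodOrd φ ν P m :=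
  ⟨h.1.trans (norm_pow_mono hmn), h.2.trans (norm_pow_mono (by omega))⟩

theorem GoodOrd.add {φ : ℂ × ℂ → ℂ × ℂ} {ν : ℕ} {P Q : MvPolynomial (Fin 2) ℂ} {m : ℕ}
    (hP : GoodOrd φ ν P m) (hQ : GoodOrd φ ν Q m) : GoodOrd φ ν (P + Q) m := by
  refine ⟨?_, ?_⟩
  · simpa using hP.1.add hQ.1
  · refine (hP.2.add hQ.2).congr_left fun z => ?_
    simp only [map_add]; ring

theorem GoodOrd.mul {φ : ℂ × ℂ → ℂ × ℂ} {ν : ℕ} {P Q : MvPolynomial (Fin 2) ℂ} {m n : ℕ}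
    (hP : GoodOrd φ ν P m) (hQ : GoodOrd φ ν Q n) : GoodOrd φ ν (P * Q) (m + n) := by
  refine ⟨?_, ?_⟩
  · refine (hP.1.mul hQ.1).congr (fun z => ?_) (fun z => ?_)
    · simp
    · ring
  · have hQ' : (fun z : ℂ × ℂ => eval ![(φ z).1, (φ z).2] Q) =O[nhds 0] fun z => ‖z‖ ^ n :=
      (hQ.1.add (hQ.2.trans (norm_pow_mono (Nat.le_add_right n ν)))).congr_left
        fun z => by ring
    have h1 := (hP.2.mul hQ').congr_right (g₂ := fun z => ‖z‖ ^ (m + n + ν)) fun z => by ring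
    have h2 := (hP.1.mul hQ.2).congr_right (g₂ := fun z => ‖z‖ ^ (m + n + ν)) fun z => by ring
    refine (h1.add h2).congr_left fun z => ?_
    simp only [map_mul]; ring

theorem GoodOrd.const (φ : ℂ × ℂ → ℂ × ℂ) (ν : ℕ) (c : ℂ) : GoodOrd φ ν (C c) 0 := by
  refine ⟨?_, ?_⟩
  · simpa using Asymptotics.isBigO_const_const c (one_ne_zero (α := ℝ)) _
  · simpa using Asymptotics.isBigO_zero _ _

theorem GoodOrd.zero (φ : ℂ × ℂ → ℂ × ℂ) (ν : ℕ) (m : ℕ) : GoodOrd φ ν 0 m := by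
  refine ⟨?_, ?_⟩
  · simpa using Asymptotics.isBigO_zero _ _
  · simpa using Asymptotics.isBigO_zero _ _

theorem GoodOrd.pow {φ : ℂ × ℂ → ℂ × ℂ} {ν : ℕ} {P : MvPolynomial (Fin 2) ℂ}
    (hP : GoodOrd φ ν P 1) (k : ℕ) : GoodOrd φ ν (P ^ k) k := by
  induction k with
  | zero => simpa using GoodOrd.const φ ν 1
  | succ k ih => rw [pow_succ]; exact ih.mul hP

theorem GoodOrd.sum {φ : ℂ × ℂ → ℂ × ℂ} {ν m : ℕ} (s : Finset ℕ)
    (f : ℕ → MvPolynomial (Fin 2) ℂ) (h : ∀ i ∈ s, GoodOrd φ ν (f i) m) :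
    GoodOrd φ ν (∑ i ∈ s, f i) m :=
  Finset.sum_induction f (fun P => GoodOrd φ ν P m) (fun _ _ => GoodOrd.add)
    (GoodOrd.zero φ ν m) h

theorem GoodOrd.prod {φ : ℂ × ℂ → ℂ × ℂ} {ν : ℕ} (s : Finset ℕ)
    (f : ℕ → MvPolynomial (Fin 2) ℂ) (h : ∀ i ∈ s, GoodOrd φ ν (f i) 1) :
    GoodOrd φ ν (∏ i ∈ s, f i) s.card := by
  induction s using Finset.induction_on with
  | empty => simpa using GoodOrd.const φ ν 1
  | insert i s hi ih =>
    rw [Finset.prod_insert hi, Finset.card_insert_of_notMem hi, add_comm]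
    exact (h i (by simp)).mul (ih fun j hj => h j (by simp [hj]))

theorem GoodOrd.npoly {φ : ℂ × ℂ → ℂ × ℂ} {ν M N : ℕ} (hM : 2 ≤ M) (hN : 2 ≤ N)
    (a b : ℕ → ℕ → ℂ) (h0 : GoodOrd φ ν (X 0) 1) (h1 : GoodOrd φ ν (X 1) 1) :
    GoodOrd φ ν (Npoly M N a b) (M + N) := by
  have hA : GoodOrd φ ν (∏ i ∈ Finset.Icc 1 (N - 1),
      (X 1 + ∑ k ∈ Finset.Icc 1 i, C (a k i) * X 0 * X 1 ^ (k - 1))) _ :=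
    GoodOrd.prod _ _ fun i _ => h1.add (GoodOrd.sum _ _ fun k _ =>
      (((GoodOrd.const φ ν _).mul h0).mul (h1.pow (k - 1))).mono (by omega))
  have hB : GoodOrd φ ν (∏ i ∈ Finset.Icc 1 (M - 2),
      (X 1 + ∑ k ∈ Finset.Icc 1 (N - 1 + 2 * i), C (b k i) * X 0 ^ (k + 1))) _ :=
    GoodOrd.prod _ _ fun i _ => h1.add (GoodOrd.sum _ _ fun k _ =>
      ((GoodOrd.const φ ν _).mul (h0.pow (k + 1))).mono (by omega))
  have h := (((h0.mul h1).mul (h1.add ((h0.pow 2).mono one_le_two))).mul hA).mul hB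
  refine GoodOrd.mono h ?_
  simp only [Nat.card_Icc]
  omega

/-- The Taylor condition gives the order of vanishing. -/
theorem isBigO_of_taylor (f : ℂ × ℂ → ℂ × ℂ) (ν : ℕ) (hf : AnalyticAt ℂ f 0)
    (hT : ∀ n ≤ ν, iteratedFDeriv ℂ n f 0 = 0) :
    f =O[nhds 0] fun z => ‖z‖ ^ (1 + ν) := by
  obtain ⟨p, r, hp⟩ := hf
  have h := hp.hasFPowerSeriesAt.isBigO_sub_partialSum_pow (1 + ν)
  refine h.congr_left fun z => ?_
  have : p.partialSum (1 + ν) z = 0 := by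
    refine Finset.sum_eq_zero fun n hn => ?_
    have h2 := hp.factorial_smul z n
    rw [hT n (by have := Finset.mem_range.1 hn; omega)] at h2
    rw [← Nat.cast_smul_eq_nsmul ℂ] at h2
    exact (smul_eq_zero.1 h2).resolve_left (Nat.cast_ne_zero.2 (Nat.factorial_ne_zero n))
  simp [this]

theorem poly_coeff_zero (n : ℕ) : ∀ p : Polynomial ℂ,
    ((fun t : ℂ => p.eval t) =O[nhdsWithin 0 {0}ᶜ] fun t => ‖t‖ ^ n) →
    ∀ d < n, p.coeff d = 0 := by
  induction n with
  | zero => intro p _ d hd; omega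
  | succ n ih =>
    intro p hp
    have h0 : p.coeff 0 = 0 := by
      have hl : Filter.Tendsto (fun t : ℂ => ‖t‖ ^ (n + 1)) (nhdsWithin 0 {0}ᶜ) (nhds 0) := by
        have : Continuous fun t : ℂ => ‖t‖ ^ (n + 1) := by fun_prop
        simpa using (this.tendsto 0).mono_left nhdsWithin_le_nhds
      have h1 := hp.trans_tendsto hl
      have h2 : Filter.Tendsto (fun t : ℂ => p.eval t) (nhdsWithin 0 {0}ᶜ)
          (nhds (p.eval 0)) := (p.continuous.tendsto 0).mono_left nhdsWithin_le_nhds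
      rw [Polynomial.coeff_zero_eq_eval_zero]
      exact tendsto_nhds_unique h2 h1
    obtain ⟨q, rfl⟩ := Polynomial.X_dvd_iff.2 h0
    intro d hd
    cases d with
    | zero => exact h0
    | succ d =>
      rw [Polynomial.coeff_X_mul]
      refine ih q ?_ d (by omega)
      obtain ⟨c, hc⟩ := hp.bound
      refine Asymptotics.IsBigO.of_bound c ?_
      filter_upwards [hc, self_mem_nhdsWithin] with t ht ht0
      have ht0' : 0 < ‖t‖ := norm_pos_iff.2 ht0
      simp only [Polynomial.eval_mul, Polynomial.eval_X, norm_mul, norm_pow, norm_norm] at ht ⊢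
      refine le_of_mul_le_mul_left ?_ ht0'
      calc _ ≤ _ := ht
        _ = _ := by ring

theorem IsHomogeneous_eval_mul {P : MvPolynomial (Fin 2) ℂ} {n : ℕ} (hP : P.IsHomogeneous n)
    (t x y : ℂ) : eval ![t * x, t * y] P = t ^ n * eval ![x, y] P := by
  rw [eval_eq', eval_eq', Finset.mul_sum]
  refine Finset.sum_congr rfl fun d hd => ?_
  have h := hP (mem_support_iff.1 hd)
  have h' : d 0 + d 1 = n := by
    rw [← h]; simp [Finsupp.weight_apply, Finsupp.sum_fintype]
  rw [← h']
  simp only [Fin.prod_univ_two, Matrix.cons_val_zero, Matrix.cons_val_one]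
  ring

theorem component_zero (Q : MvPolynomial (Fin 2) ℂ) (n : ℕ)
    (hQ : (fun z : ℂ × ℂ => eval ![z.1, z.2] Q) =O[nhds 0] fun z => ‖z‖ ^ n) :
    ∀ d < n, homogeneousComponent d Q = 0 := by
  intro d hd
  by_cases hdeg : Q.totalDegree < d
  · exact homogeneousComponent_eq_zero _ _ hdeg
  refine MvPolynomial.funext fun v => ?_
  have hv : v = ![v 0, v 1] := by ext i; fin_cases i <;> rfl
  rw [hv, map_zero]
  set p : Polynomial ℂ := ∑ i ∈ Finset.range (Q.totalDegree + 1),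
    Polynomial.C (eval ![v 0, v 1] (homogeneousComponent i Q)) * Polynomial.X ^ i with hp
  have hpc : p.coeff d = eval ![v 0, v 1] (homogeneousComponent d Q) := by
    rw [hp, Polynomial.finsetSum_coeff]
    simp only [Polynomial.coeff_C_mul_X_pow]
    rw [Finset.sum_ite_eq, if_pos (Finset.mem_range.2 (by omega))]
  rw [← hpc]
  refine poly_coeff_zero n p ?_ d hd
  have hev : ∀ t : ℂ, p.eval t = eval ![t * v 0, t * v 1] Q := by
    intro t
    conv_rhs => rw [← sum_homogeneousComponent Q]
    rw [hp, Polynomial.eval_finsetSum, map_sum]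
    refine Finset.sum_congr rfl fun i _ => ?_
    rw [IsHomogeneous_eval_mul (homogeneousComponent_isHomogeneous i Q)]
    rw [Polynomial.eval_mul, Polynomial.eval_C, Polynomial.eval_pow, Polynomial.eval_X, mul_comm]
  have hlim : Filter.Tendsto (fun t : ℂ => ((t * v 0, t * v 1) : ℂ × ℂ)) (nhdsWithin 0 {0}ᶜ)
      (nhds 0) := by
    have : Continuous fun t : ℂ => ((t * v 0, t * v 1) : ℂ × ℂ) := by fun_prop
    have h := this.tendsto 0
    simp only [zero_mul] at h
    exact h.mono_left nhdsWithin_le_nhds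
  have h := hQ.comp_tendsto hlim
  refine (h.congr_left (f₂ := fun t => p.eval t) fun t => (hev t).symm).trans ?_
  refine Asymptotics.IsBigO.of_bound (‖(v 0, v 1)‖ ^ n) (Filter.Eventually.of_forall fun t => ?_)
  have : ((t * v 0, t * v 1) : ℂ × ℂ) = t • (v 0, v 1) := rfl
  simp only [Function.comp, this, norm_smul, norm_pow, norm_mul, norm_norm]
  rw [mul_pow, mul_comm]

/-- If `φ - id` vanishes to order at least `ν+1` at `0` (all Taylor terms of total
degree `≤ ν` of `φ - id` vanish) and `N_p ∘ φ = N_q` near `0`, then all coefficients of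
`N_p - N_q` in degree `< M+N+ν` vanish; equivalently the homogeneous components satisfy
`N_p^{(M+N+l)} = N_q^{(M+N+l)}` for `0 ≤ l ≤ ν-1`. -/
theorem stmt_4 (M N : ℕ) (hM : 2 ≤ M) (hN : 2 ≤ N) (a b a' b' : ℕ → ℕ → ℂ)
    (ν : ℕ) (hν : 1 ≤ ν)
    (U : Set (ℂ × ℂ)) (hU : IsOpen U) (h0U : (0 : ℂ × ℂ) ∈ U)
    (φ : ℂ × ℂ → ℂ × ℂ) (hφan : ∀ z ∈ U, AnalyticAt ℂ φ z) (hφ0 : φ 0 = 0)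
    (hTaylor : ∀ n ≤ ν, iteratedFDeriv ℂ n (fun z : ℂ × ℂ => φ z - z) 0 = 0)
    (hconj : ∀ z ∈ U, Nfun M N a b (φ z) = Nfun M N a' b' z) :
    (∀ d, d < M + N + ν →
        homogeneousComponent d (Npoly M N a b - Npoly M N a' b') = 0) ∧
      ∀ l, l ≤ ν - 1 →
        homogeneousComponent (M + N + l) (Npoly M N a b) =
          homogeneousComponent (M + N + l) (Npoly M N a' b') := by
  have h0 : (0 : ℂ × ℂ) ∈ U := h0U
  have hB := isBigO_of_taylor (fun z => φ z - z) ν ((hφan 0 h0U).sub analyticAt_id) hTaylor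
  have hX0 : GoodOrd φ ν (X 0) 1 := by
    refine ⟨?_, ?_⟩
    · refine Asymptotics.IsBigO.of_bound 1 (Filter.Eventually.of_forall fun z => ?_)
      simpa using norm_fst_le z
    · refine Asymptotics.IsBigO.trans ?_ hB
      refine Asymptotics.IsBigO.of_bound 1 (Filter.Eventually.of_forall fun z => ?_)
      simpa using norm_fst_le (φ z - z)
  have hX1 : GoodOrd φ ν (X 1) 1 := by
    refine ⟨?_, ?_⟩
    · refine Asymptotics.IsBigO.of_bound 1 (Filter.Eventually.of_forall fun z => ?_)
      simpa using norm_snd_le z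
    · refine Asymptotics.IsBigO.trans ?_ hB
      refine Asymptotics.IsBigO.of_bound 1 (Filter.Eventually.of_forall fun z => ?_)
      simpa using norm_snd_le (φ z - z)
  have hG := (GoodOrd.npoly hM hN a b hX0 hX1).2
  have hD : (fun z : ℂ × ℂ => eval ![z.1, z.2] (Npoly M N a b - Npoly M N a' b'))
      =O[nhds 0] fun z => ‖z‖ ^ (M + N + ν) := by
    refine Asymptotics.IsBigO.congr' hG.neg_left ?_ (Filter.EventuallyEq.refl _ _)
    filter_upwards [hU.mem_nhds h0U] with z hz
    have := hconj z hz
    unfold Nfun at this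
    rw [this, map_sub]; ring
  have key := component_zero _ _ hD
  refine ⟨key, fun l hl => ?_⟩
  have := key (M + N + l) (by omega)
  rwa [map_sub, sub_eq_zero] at this
end

section
/- Let p and q be parameters in 𝒫 (with entries a_{k,i}, b_{k,i} and a′_{k,i}, b′_{k,i} respectively). If N_p = N_q as polynomials in ℂ[x,y], and the first-level coefficients agree (a_{1,i} = a′_{1,i} for all 1 ≤ i ≤ N−1 and b_{1,i} = b′_{1,i} for all 1 ≤ i ≤ M−2), then p = q, i.e. a_{k,i} = a′_{k,i} and b_{k,i} = b′_{k,i} for all admissible indices. -/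
open MvPolynomial

/-- If the image of `N_p` in a domain vanishes, the image of one factor vanishes. -/
lemma Npoly_factor {R : Type*} [CommRing R] [IsDomain R] [Algebra ℂ R]
    (M N : ℕ) (a b : ℕ → ℕ → ℂ) (x y : R)
    (h : aeval ![x, y] (Npoly M N a b) = 0) :
    x = 0 ∨ y = 0 ∨ y + x ^ 2 = 0 ∨
    (∃ i ∈ Finset.Icc 1 (N - 1),
      y + ∑ k ∈ Finset.Icc 1 i, algebraMap ℂ R (a k i) * x * y ^ (k - 1) = 0) ∨
    (∃ i ∈ Finset.Icc 1 (M - 2),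
      y + ∑ k ∈ Finset.Icc 1 (N - 1 + 2 * i), algebraMap ℂ R (b k i) * x ^ (k + 1) = 0) := by
  simp only [Npoly, map_mul, map_add, map_prod, map_sum, map_pow, aeval_X, algHom_C,
    Matrix.cons_val_zero, Matrix.cons_val_one, mul_eq_zero, Finset.prod_eq_zero_iff] at h
  simpa only [or_assoc] using h

lemma Npoly_zero_A {R : Type*} [CommRing R] [Algebra ℂ R]
    (M N : ℕ) (a b : ℕ → ℕ → ℂ) (x y : R) (i : ℕ) (hi : i ∈ Finset.Icc 1 (N - 1))
    (h : y + ∑ k ∈ Finset.Icc 1 i, algebraMap ℂ R (a k i) * x * y ^ (k - 1) = 0) :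
    aeval ![x, y] (Npoly M N a b) = 0 := by
  simp only [Npoly, map_mul, map_add, map_prod, map_sum, map_pow, aeval_X, algHom_C,
    Matrix.cons_val_zero, Matrix.cons_val_one]
  rw [Finset.prod_eq_zero hi h]
  simp

lemma Npoly_zero_B {R : Type*} [CommRing R] [Algebra ℂ R]
    (M N : ℕ) (a b : ℕ → ℕ → ℂ) (x y : R) (i : ℕ) (hi : i ∈ Finset.Icc 1 (M - 2))
    (h : y + ∑ k ∈ Finset.Icc 1 (N - 1 + 2 * i), algebraMap ℂ R (b k i) * x ^ (k + 1) = 0) :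
    aeval ![x, y] (Npoly M N a b) = 0 := by
  simp only [Npoly, map_mul, map_add, map_prod, map_sum, map_pow, aeval_X, algHom_C,
    Matrix.cons_val_zero, Matrix.cons_val_one]
  rw [Finset.prod_eq_zero hi h]
  simp

/-- The power series with shifted coefficients. -/
noncomputable def shiftSer (c : ℕ → ℂ) (n : ℕ) : PowerSeries ℂ :=
  ∑ k ∈ Finset.Icc 1 n, algebraMap ℂ (PowerSeries ℂ) (c k) * PowerSeries.X ^ (k - 1)

lemma coeff_shiftSer (c : ℕ → ℂ) (n k : ℕ) (hk : k ∈ Finset.Icc 1 n) :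
    PowerSeries.coeff (k - 1) (shiftSer c n) = c k := by
  have hk' := Finset.mem_Icc.1 hk
  unfold shiftSer
  rw [map_sum, Finset.sum_eq_single k]
  · simp [PowerSeries.algebraMap_apply, PowerSeries.coeff_X_pow]
  · intro j hj hne
    have hj' := Finset.mem_Icc.1 hj
    have : k - 1 ≠ j - 1 := by omega
    simp [PowerSeries.algebraMap_apply, PowerSeries.coeff_X_pow, this]
  · intro h; exact absurd hk h

lemma const_shiftSer (c : ℕ → ℂ) (n : ℕ) (hn : 1 ≤ n) :
    PowerSeries.constantCoeff (shiftSer c n) = c 1 := by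
  have := coeff_shiftSer c n 1 (by simp [hn])
  simpa using this

/-- Constant coefficient of a composed sum. -/
lemma const_comp (c : ℕ → ℂ) (n : ℕ) (hn : 1 ≤ n) (w : PowerSeries ℂ)
    (hw : PowerSeries.constantCoeff w = 0) :
    PowerSeries.constantCoeff
      (∑ k ∈ Finset.Icc 1 n, algebraMap ℂ (PowerSeries ℂ) (c k) * w ^ (k - 1)) = c 1 := by
  rw [map_sum, Finset.sum_eq_single 1]
  · simp [PowerSeries.algebraMap_apply]
  · intro j hj hne
    have hj' := Finset.mem_Icc.1 hj
    have : j - 1 ≠ 0 := by omega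
    simp [hw, this]
  · intro h; exact absurd (by simp [hn]) h

lemma sum_A (c : ℕ → ℂ) (n : ℕ) (x y : PowerSeries ℂ) :
    ∑ k ∈ Finset.Icc 1 n, algebraMap ℂ (PowerSeries ℂ) (c k) * x * y ^ (k - 1) =
    x * ∑ k ∈ Finset.Icc 1 n, algebraMap ℂ (PowerSeries ℂ) (c k) * y ^ (k - 1) := by
  rw [Finset.mul_sum]
  exact Finset.sum_congr rfl fun k _ => by ring

lemma sum_B (c : ℕ → ℂ) (n : ℕ) (x : PowerSeries ℂ) :
    ∑ k ∈ Finset.Icc 1 n, algebraMap ℂ (PowerSeries ℂ) (c k) * x ^ (k + 1) =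
    x ^ 2 * ∑ k ∈ Finset.Icc 1 n, algebraMap ℂ (PowerSeries ℂ) (c k) * x ^ (k - 1) := by
  rw [Finset.mul_sum]
  refine Finset.sum_congr rfl fun k hk => ?_
  have hk' := Finset.mem_Icc.1 hk
  obtain ⟨m, rfl⟩ : ∃ m, k = m + 1 := ⟨k - 1, by omega⟩
  simp only [Nat.add_sub_cancel]
  ring

/-- If `N_p = N_q` as polynomials and the first-level coefficients of `p, q ∈ 𝒫` agree,
then all coefficients agree. -/
theorem stmt_5 (M N : ℕ) (hM : 2 ≤ M) (hN : 2 ≤ N) (a b a' b' : ℕ → ℕ → ℂ)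
    (hp : memP M N a b) (hq : memP M N a' b')
    (hEq : Npoly M N a b = Npoly M N a' b')
    (ha1 : ∀ i ∈ Finset.Icc 1 (N - 1), a 1 i = a' 1 i)
    (hb1 : ∀ i ∈ Finset.Icc 1 (M - 2), b 1 i = b' 1 i) :
    (∀ i ∈ Finset.Icc 1 (N - 1), ∀ k ∈ Finset.Icc 1 i, a k i = a' k i) ∧
    (∀ i ∈ Finset.Icc 1 (M - 2), ∀ k ∈ Finset.Icc 1 (N - 1 + 2 * i), b k i = b' k i) := by
  obtain ⟨hp1, hp2, hp3, hp4⟩ := hp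
  obtain ⟨hq1, hq2, hq3, hq4⟩ := hq
  have hX : (PowerSeries.X : PowerSeries ℂ) ≠ 0 := PowerSeries.X_ne_zero
  constructor
  · intro i hi k hk
    have hi1 := (Finset.mem_Icc.1 hi).1
    set A := shiftSer (fun k => a' k i) i with hA
    have hA0 : PowerSeries.constantCoeff A ≠ 0 := by
      rw [hA, const_shiftSer _ _ hi1]; exact hq1 i hi
    have hAu : A * A⁻¹ = 1 := PowerSeries.mul_inv_cancel A hA0
    have hu : A⁻¹ ≠ 0 := by
      intro h; rw [h] at hAu; simp at hAu
    have h0 := Npoly_zero_A M N a' b' (-(PowerSeries.X * A⁻¹)) PowerSeries.X i hi (by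
      rw [sum_A]
      change PowerSeries.X + -(PowerSeries.X * A⁻¹) * A = 0
      linear_combination (-PowerSeries.X) * hAu)
    rw [← hEq] at h0
    rcases Npoly_factor _ _ _ _ _ _ h0 with h | h | h | ⟨j, hj, h⟩ | ⟨j, hj, h⟩
    · exact absurd h (neg_ne_zero.2 (mul_ne_zero hX hu))
    · exact absurd h hX
    · exfalso
      have h1 : PowerSeries.X * (1 + PowerSeries.X * (A⁻¹) ^ 2) = 0 := by
        linear_combination h
      have h2 := (mul_eq_zero.1 h1).resolve_left hX
      simpa using congrArg PowerSeries.constantCoeff h2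
    · have hj1 := (Finset.mem_Icc.1 hj).1
      rw [sum_A] at h
      change PowerSeries.X + -(PowerSeries.X * A⁻¹) * shiftSer (fun k => a k j) j = 0 at h
      have h1 : PowerSeries.X * (A - shiftSer (fun k => a k j) j) = 0 := by
        linear_combination A * h + PowerSeries.X * shiftSer (fun k => a k j) j * hAu
      have h2 := sub_eq_zero.1 ((mul_eq_zero.1 h1).resolve_left hX)
      have h3 := congrArg PowerSeries.constantCoeff h2
      rw [hA, const_shiftSer _ _ hi1, const_shiftSer _ _ hj1] at h3
      have hij : i = j := by
        by_contra hne
        exact hp3 i hi j hj hne ((ha1 i hi).trans h3)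
      subst hij
      have h4 := congrArg (PowerSeries.coeff (k - 1)) h2
      rw [hA, coeff_shiftSer _ _ _ hk, coeff_shiftSer _ _ _ hk] at h4
      exact h4.symm
    · exfalso
      rw [sum_B] at h
      generalize (∑ k ∈ Finset.Icc 1 (N - 1 + 2 * j), _ : PowerSeries ℂ) = S at h
      have h1 : PowerSeries.X * (1 + PowerSeries.X * ((A⁻¹) ^ 2 * S)) = 0 := by
        linear_combination h
      have h2 := (mul_eq_zero.1 h1).resolve_left hX
      simpa using congrArg PowerSeries.constantCoeff h2
  · intro i hi k hk
    have hi1 := (Finset.mem_Icc.1 hi).1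
    have hn : ∀ j, 1 ≤ j → 1 ≤ N - 1 + 2 * j := fun j hj => by omega
    set B := shiftSer (fun k => b' k i) (N - 1 + 2 * i) with hB
    have hBc : PowerSeries.constantCoeff B = b' 1 i := by
      rw [hB, const_shiftSer _ _ (hn i hi1)]
    have hX2 : (PowerSeries.X : PowerSeries ℂ) ^ 2 ≠ 0 := pow_ne_zero _ hX
    have h0 := Npoly_zero_B M N a' b' PowerSeries.X (-(PowerSeries.X ^ 2 * B)) i hi (by
      rw [sum_B]
      change -(PowerSeries.X ^ 2 * B) + PowerSeries.X ^ 2 * B = 0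
      ring)
    rw [← hEq] at h0
    rcases Npoly_factor _ _ _ _ _ _ h0 with h | h | h | ⟨j, hj, h⟩ | ⟨j, hj, h⟩
    · exact absurd h hX
    · exfalso
      have h2 := (mul_eq_zero.1 (neg_eq_zero.1 h)).resolve_left hX2
      rw [h2] at hBc
      exact (hq2 i hi).1 (by simpa using hBc.symm)
    · exfalso
      have h1 : PowerSeries.X ^ 2 * (1 - B) = 0 := by linear_combination h
      have h2 := sub_eq_zero.1 ((mul_eq_zero.1 h1).resolve_left hX2)
      rw [← h2] at hBc
      exact (hq2 i hi).2 (by simpa using hBc.symm)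
    · exfalso
      have hj1 := (Finset.mem_Icc.1 hj).1
      rw [sum_A] at h
      have hc := const_comp (fun k => a k j) j hj1 (-(PowerSeries.X ^ 2 * B)) (by simp)
      generalize (∑ k ∈ Finset.Icc 1 j, _ : PowerSeries ℂ) = S at h hc
      have h1 : PowerSeries.X * (S - PowerSeries.X * B) = 0 := by linear_combination h
      have h2 := congrArg PowerSeries.constantCoeff ((mul_eq_zero.1 h1).resolve_left hX)
      simp [hc] at h2
      exact hp1 j hj h2
    · have hj1 := (Finset.mem_Icc.1 hj).1
      rw [sum_B] at h
      change -(PowerSeries.X ^ 2 * B) +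
        PowerSeries.X ^ 2 * shiftSer (fun k => b k j) (N - 1 + 2 * j) = 0 at h
      have h1 : PowerSeries.X ^ 2 * (B - shiftSer (fun k => b k j) (N - 1 + 2 * j)) = 0 := by
        linear_combination -h
      have h2 := sub_eq_zero.1 ((mul_eq_zero.1 h1).resolve_left hX2)
      have h3 := congrArg PowerSeries.constantCoeff h2
      rw [hBc, const_shiftSer _ _ (hn j hj1)] at h3
      have hij : i = j := by
        by_contra hne
        exact hp4 i hi j hj hne ((hb1 i hi).trans h3)
      subst hij
      have h4 := congrArg (PowerSeries.coeff (k - 1)) h2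
      rw [hB, coeff_shiftSer _ _ _ hk, coeff_shiftSer _ _ _ hk] at h4
      exact h4.symm
end

section
/- For every parameter p and every λ ∈ ℂ∖{0}, one has the identity of polynomials N_p(λx, λ²y) = λ^{2M+2N−1}·N_{λ·p}(x,y), where λ·p is the parameter with entries λ^{2k−3}·a_{k,i} and λ^{k−1}·b_{k,i}. -/
open MvPolynomial

/-- `N_p(λx, λ²y) = λ^{2M+2N-1} · N_{λ·p}(x,y)`, where `λ·p` has entries
`λ^{2k-3}·a_{k,i}` and `λ^{k-1}·b_{k,i}`. -/
theorem stmt_6 (M N : ℕ) (hM : 2 ≤ M) (hN : 2 ≤ N) (a b : ℕ → ℕ → ℂ)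
    (l : ℂ) (hl : l ≠ 0) :
    aeval ![(C l * X 0 : MvPolynomial (Fin 2) ℂ), C (l ^ 2) * X 1] (Npoly M N a b) =
      C (l ^ (2 * M + 2 * N - 1)) *
        Npoly M N (fun k i => l ^ (2 * (k : ℤ) - 3) * a k i)
          (fun k i => l ^ ((k : ℤ) - 1) * b k i) := by
  obtain ⟨m, rfl⟩ := Nat.exists_eq_add_of_le hM
  obtain ⟨n, rfl⟩ := Nat.exists_eq_add_of_le hN
  have e : 2 * (2 + m) + 2 * (2 + n) - 1 = 5 + 2 * (n + 1) + 2 * m := by omega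
  have e1 : 2 + n - 1 = n + 1 := by omega
  have e2 : 2 + m - 2 = m := by omega
  have ha : ∀ k i : ℕ, 1 ≤ k →
      l ^ (1 + 2 * (k - 1)) * a k i = l ^ 2 * (l ^ (2 * (k : ℤ) - 3) * a k i) := by
    intro k i hk
    obtain ⟨j, rfl⟩ := Nat.exists_eq_add_of_le hk
    rw [← mul_assoc]
    congr 1
    rw [← zpow_natCast, ← zpow_natCast, ← zpow_add₀ hl]
    congr 1
    have : 1 + j - 1 = j := by omega
    rw [this]
    push_cast
    ring
  have hb : ∀ k i : ℕ,
      l ^ (k + 1) * b k i = l ^ 2 * (l ^ ((k : ℤ) - 1) * b k i) := by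
    intro k i
    rw [← mul_assoc]
    congr 1
    rw [← zpow_natCast, ← zpow_natCast, ← zpow_add₀ hl]
    congr 1
    push_cast
    ring
  have hA : ∀ i : ℕ,
      (C (l ^ 2) * X 1 + ∑ k ∈ Finset.Icc 1 i,
        C (a k i) * (C l * X 0) * (C (l ^ 2) * X 1) ^ (k - 1) : MvPolynomial (Fin 2) ℂ) =
      C (l ^ 2) * (X 1 + ∑ k ∈ Finset.Icc 1 i,
        C (l ^ (2 * (k : ℤ) - 3) * a k i) * X 0 * X 1 ^ (k - 1)) := by
    intro i
    rw [mul_add, Finset.mul_sum]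
    congr 1
    refine Finset.sum_congr rfl fun k hk => ?_
    have h := congrArg (C (σ := Fin 2)) (ha k i (Finset.mem_Icc.mp hk).1)
    rw [C_mul, C_mul (a := l ^ 2), pow_add, pow_mul, pow_one, C_mul, C_pow (a := l ^ 2)] at h
    rw [mul_pow]
    linear_combination (X 0 * X 1 ^ (k - 1)) * h
  have hB : ∀ i r : ℕ,
      (C (l ^ 2) * X 1 + ∑ k ∈ Finset.Icc 1 r,
        C (b k i) * (C l * X 0) ^ (k + 1) : MvPolynomial (Fin 2) ℂ) =
      C (l ^ 2) * (X 1 + ∑ k ∈ Finset.Icc 1 r,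
        C (l ^ ((k : ℤ) - 1) * b k i) * X 0 ^ (k + 1)) := by
    intro i r
    rw [mul_add, Finset.mul_sum]
    congr 1
    refine Finset.sum_congr rfl fun k _ => ?_
    have h := congrArg (C (σ := Fin 2)) (hb k i)
    rw [C_mul, C_mul (a := l ^ 2), C_pow] at h
    rw [mul_pow]
    linear_combination (X 0 ^ (k + 1)) * h
  have hC : ∀ z : ℂ, algebraMap ℂ (MvPolynomial (Fin 2) ℂ) z = C z := fun _ => rfl
  unfold Npoly
  simp only [map_mul (aeval _), map_add (aeval _), map_prod, map_sum, map_pow (aeval _), aeval_X,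
    aeval_C, hC, Matrix.cons_val_zero, Matrix.cons_val_one, hA, hB, Finset.prod_mul_distrib,
    Finset.prod_const, Nat.card_Icc, e, e1, e2]
  simp only [Nat.add_sub_cancel, C_pow]
  ring
end

section
/- For every parameter p, substituting x = x₁ and y = x₁y₁ (the first blow-up E₁(x₁,y₁) = (x₁, x₁y₁)) yields the identity of polynomials N_p(x₁, x₁y₁) = x₁^{M+N−1}·Ñ_p(x₁,y₁), where Ñ_p(x₁,y₁) = x₁·y₁·(y₁+x₁)·∏_{i=1}^{N−1}(y₁ + Σ_{k=1}^{i} a_{k,i}·x₁^{k−1}·y₁^{k−1})·∏_{i=1}^{M−2}(y₁ + Σ_{k=1}^{N−1+2i} b_{k,i}·x₁^{k}). -/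
open MvPolynomial

/-- The strict transform `Ñ_p` of the normal form after the first blow-up
`E₁(x₁,y₁) = (x₁, x₁y₁)`. -/
noncomputable def Ntilde (M N : ℕ) (a b : ℕ → ℕ → ℂ) : MvPolynomial (Fin 2) ℂ :=
  X 0 * X 1 * (X 1 + X 0) *
    (∏ i ∈ Finset.Icc 1 (N - 1),
      (X 1 + ∑ k ∈ Finset.Icc 1 i, C (a k i) * X 0 ^ (k - 1) * X 1 ^ (k - 1))) *
    (∏ i ∈ Finset.Icc 1 (M - 2),
      (X 1 + ∑ k ∈ Finset.Icc 1 (N - 1 + 2 * i), C (b k i) * X 0 ^ k))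

/-- Substituting `x = x₁`, `y = x₁y₁` (the first blow-up) yields
`N_p(x₁, x₁y₁) = x₁^{M+N-1} · Ñ_p(x₁,y₁)`. -/
theorem stmt_8 (M N : ℕ) (hM : 2 ≤ M) (hN : 2 ≤ N) (a b : ℕ → ℕ → ℂ) :
    aeval ![(X 0 : MvPolynomial (Fin 2) ℂ), X 0 * X 1] (Npoly M N a b) =
      X 0 ^ (M + N - 1) * Ntilde M N a b := by
  have h1 : ∀ i : ℕ, (X 0 * X 1 + ∑ k ∈ Finset.Icc 1 i,
      C (a k i) * X 0 * (X 0 * X 1) ^ (k - 1) : MvPolynomial (Fin 2) ℂ) =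
      X 0 * (X 1 + ∑ k ∈ Finset.Icc 1 i, C (a k i) * X 0 ^ (k - 1) * X 1 ^ (k - 1)) := by
    intro i
    rw [mul_add, Finset.mul_sum]
    congr 1
    refine Finset.sum_congr rfl fun k _ => ?_
    rw [mul_pow]
    ring
  have h2 : ∀ i : ℕ, (X 0 * X 1 + ∑ k ∈ Finset.Icc 1 (N - 1 + 2 * i),
      C (b k i) * X 0 ^ (k + 1) : MvPolynomial (Fin 2) ℂ) =
      X 0 * (X 1 + ∑ k ∈ Finset.Icc 1 (N - 1 + 2 * i), C (b k i) * X 0 ^ k) := by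
    intro i
    rw [mul_add, Finset.mul_sum]
    congr 1
    refine Finset.sum_congr rfl fun k _ => ?_
    ring
  have hE : M + N - 1 = 2 + (N - 1) + (M - 2) := by omega
  unfold Npoly Ntilde
  simp only [map_mul, map_add, map_prod, map_sum, map_pow, aeval_X, aeval_C, algebraMap_eq,
    Matrix.cons_val_zero, Matrix.cons_val_one]
  simp only [h1, h2, Finset.prod_mul_distrib, Finset.prod_const, Nat.card_Icc,
    Nat.add_sub_cancel]
  rw [hE, pow_add, pow_add]
  ring
end

section
/- For every parameter p, substituting x = x₃ and y = x₃²y₃ (the chart V₃ of the composition of two blow-ups) yields the identity of polynomials N_p(x₃, x₃²y₃) = x₃^{2M+N}·y₃·(y₃+1)·∏_{i=1}^{N−1}(a_{1,i} + x₃y₃ + Σ_{k=2}^{i} a_{k,i}·x₃^{2k−2}·y₃^{k−1})·∏_{i=1}^{M−2}(y₃ + Σ_{k=1}^{N−1+2i} b_{k,i}·x₃^{k−1}). In particular, setting x₃ = 0 in the cofactor of x₃^{2M+N} gives the polynomial P(y₃) = y₃(y₃+1)·(∏_{j=1}^{N−1} a_{1,j})·∏_{j=1}^{M−2}(y₃ +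 b_{1,j}). -/
open MvPolynomial

/-- The cofactor of `x₃^{2M+N}` in the chart `V₃`. -/
noncomputable def cofactorV3 (M N : ℕ) (a b : ℕ → ℕ → ℂ) : MvPolynomial (Fin 2) ℂ :=
  X 1 * (X 1 + 1) *
    (∏ i ∈ Finset.Icc 1 (N - 1),
      (C (a 1 i) + X 0 * X 1 +
        ∑ k ∈ Finset.Icc 2 i, C (a k i) * X 0 ^ (2 * k - 2) * X 1 ^ (k - 1))) *
    (∏ i ∈ Finset.Icc 1 (M - 2),
      (X 1 + ∑ k ∈ Finset.Icc 1 (N - 1 + 2 * i), C (b k i) * X 0 ^ (k - 1)))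

/-- In the chart `V₃`, i.e. substituting `x = x₃`, `y = x₃²y₃`, the normal form becomes
`x₃^{2M+N}` times an explicit cofactor; setting `x₃ = 0` in the cofactor gives
`P(y₃) = y₃(y₃+1)·(∏ a_{1,j})·∏ (y₃ + b_{1,j})`. -/
theorem stmt_9 (M N : ℕ) (hM : 2 ≤ M) (hN : 2 ≤ N) (a b : ℕ → ℕ → ℂ) :
    aeval ![(X 0 : MvPolynomial (Fin 2) ℂ), X 0 ^ 2 * X 1] (Npoly M N a b) =
      X 0 ^ (2 * M + N) * cofactorV3 M N a b ∧
    aeval ![(0 : MvPolynomial (Fin 2) ℂ), X 1] (cofactorV3 M N a b) =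
      X 1 * (X 1 + 1) * C (∏ j ∈ Finset.Icc 1 (N - 1), a 1 j) *
        ∏ j ∈ Finset.Icc 1 (M - 2), (X 1 + C (b 1 j)) := by
  constructor
  · have h1 : ∀ i ∈ Finset.Icc 1 (N - 1),
        ((X 0 : MvPolynomial (Fin 2) ℂ) ^ 2 * X 1 +
          ∑ k ∈ Finset.Icc 1 i, C (a k i) * X 0 * (X 0 ^ 2 * X 1) ^ (k - 1)) =
        X 0 * (C (a 1 i) + X 0 * X 1 +
          ∑ k ∈ Finset.Icc 2 i, C (a k i) * X 0 ^ (2 * k - 2) * X 1 ^ (k - 1)) := by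
      intro i hi
      have hi1 : 1 ≤ i := (Finset.mem_Icc.mp hi).1
      rw [← Finset.add_sum_Ioc_eq_sum_Icc hi1]
      have hI : Finset.Ioc 1 i = Finset.Icc 2 i := by
        ext k; simp only [Finset.mem_Ioc, Finset.mem_Icc]; omega
      rw [hI, mul_add, Finset.mul_sum]
      have : ∀ k ∈ Finset.Icc 2 i,
          C (a k i) * (X 0 : MvPolynomial (Fin 2) ℂ) * (X 0 ^ 2 * X 1) ^ (k - 1) =
          X 0 * (C (a k i) * X 0 ^ (2 * k - 2) * X 1 ^ (k - 1)) := by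
        intro k hk
        have : 2 * k - 2 = 2 * (k - 1) := by omega
        rw [this, mul_pow, ← pow_mul]
        ring
      rw [Finset.sum_congr rfl this]
      simp only [Nat.sub_self, pow_zero]
      ring
    have h2 : ∀ i ∈ Finset.Icc 1 (M - 2),
        ((X 0 : MvPolynomial (Fin 2) ℂ) ^ 2 * X 1 +
          ∑ k ∈ Finset.Icc 1 (N - 1 + 2 * i), C (b k i) * X 0 ^ (k + 1)) =
        X 0 ^ 2 * (X 1 + ∑ k ∈ Finset.Icc 1 (N - 1 + 2 * i), C (b k i) * X 0 ^ (k - 1)) := by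
      intro i hi
      rw [mul_add, Finset.mul_sum]
      congr 1
      refine Finset.sum_congr rfl fun k hk => ?_
      obtain ⟨j, rfl⟩ : ∃ j, k = j + 1 :=
        ⟨k - 1, by have := (Finset.mem_Icc.mp hk).1; omega⟩
      rw [Nat.add_sub_cancel]
      ring
    simp only [Npoly, cofactorV3, map_mul, map_add, map_prod, map_sum, map_pow, aeval_X,
      aeval_C, MvPolynomial.algebraMap_eq, Matrix.cons_val_zero, Matrix.cons_val_one]
    rw [Finset.prod_congr rfl h1, Finset.prod_congr rfl h2, Finset.prod_mul_distrib,
      Finset.prod_mul_distrib, Finset.prod_const, Finset.prod_const, Nat.card_Icc, Nat.card_Icc]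
    obtain ⟨m, rfl⟩ := Nat.exists_eq_add_of_le hM
    obtain ⟨n, rfl⟩ := Nat.exists_eq_add_of_le hN
    have e1 : 2 + n - 1 + 1 - 1 = n + 1 := by omega
    have e2 : 2 + m - 2 + 1 - 1 = m := by omega
    rw [e1, e2]
    ring
  · simp only [cofactorV3, map_mul, map_add, map_prod, map_sum, map_pow, aeval_X, map_one,
      aeval_C, MvPolynomial.algebraMap_eq, Matrix.cons_val_zero, Matrix.cons_val_one]
    congr 1
    · congr 1
      refine Finset.prod_congr rfl fun i hi => ?_
      rw [Finset.sum_eq_zero, zero_mul, add_zero, add_zero]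
      intro k hk
      have := (Finset.mem_Icc.mp hk).1
      rw [zero_pow (by omega), mul_zero, zero_mul]
    · refine Finset.prod_congr rfl fun i hi => ?_
      have := (Finset.mem_Icc.mp hi).1
      rw [Finset.sum_eq_single 1]
      · simp
      · intro k hk hk1
        have := (Finset.mem_Icc.mp hk).1
        rw [zero_pow (by omega), mul_zero]
      · intro h
        exact absurd (Finset.mem_Icc.mpr ⟨le_refl _, by omega⟩) h
end

section
/- Let 1 ≤ l ≤ N−2 and let p, q be parameters (with entries a_{k,i}, b_{k,i} and a′_{k,i}, b′_{k,i} respectively) such that a_{k,i} = a′_{k,i} for all i and all k ≤ l, and b_{k,i} = b′_{k,i} for all i and all k ≤ l. Then the homogeneous component of total degree M+N+l of N_p − N_q equals x²·y^{M+l}·Σ_{i=l+1}^{N−1} (a_{l+1,i} − a′_{l+1,i})·∏_{j=1, j≠i}^{N−1}(y + a_{1,j}·x). -/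
open MvPolynomial

lemma aux_mul_mem {R : Type*} [CommRing R] {I : Ideal R} {m n k : ℕ} {x y : R}
    (hx : x ∈ I ^ m) (hy : y ∈ I ^ n) (h : k ≤ m + n) : x * y ∈ I ^ k := by
  apply Ideal.pow_le_pow_right h
  rw [pow_add]
  exact Ideal.mul_mem_mul hx hy

lemma aux_prod {R : Type*} [CommRing R] (I : Ideal R) (l : ℕ) (s : Finset ℕ)
    (f f' g d : ℕ → R) (hf : ∀ i ∈ s, f i ∈ I ^ 1) (hf' : ∀ i ∈ s, f' i ∈ I ^ 1)
    (hg : ∀ i ∈ s, g i ∈ I ^ 1) (hd : ∀ i ∈ s, d i ∈ I ^ (l + 1))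
    (hfg : ∀ i ∈ s, f i - g i ∈ I ^ 2) (hfg' : ∀ i ∈ s, f' i - g i ∈ I ^ 2)
    (hff : ∀ i ∈ s, f i - f' i - d i ∈ I ^ (l + 2)) :
    (∏ i ∈ s, f i) ∈ I ^ s.card ∧ (∏ i ∈ s, f' i) ∈ I ^ s.card ∧
    (∏ i ∈ s, g i) ∈ I ^ s.card ∧
    (∏ i ∈ s, f i) - (∏ i ∈ s, g i) ∈ I ^ (s.card + 1) ∧
    (∑ i ∈ s, d i * ∏ j ∈ s.erase i, g j) ∈ I ^ (s.card + l) ∧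
    (∏ i ∈ s, f i) - (∏ i ∈ s, f' i) - (∑ i ∈ s, d i * ∏ j ∈ s.erase i, g j)
      ∈ I ^ (s.card + l + 1) := by
  induction s using Finset.induction_on with
  | empty => simp
  | insert i s hi ih =>
    obtain ⟨h1, h2, h3, h4, h5, h6⟩ := ih
      (fun j hj => hf j (Finset.mem_insert_of_mem hj))
      (fun j hj => hf' j (Finset.mem_insert_of_mem hj))
      (fun j hj => hg j (Finset.mem_insert_of_mem hj))
      (fun j hj => hd j (Finset.mem_insert_of_mem hj))
      (fun j hj => hfg j (Finset.mem_insert_of_mem hj))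
      (fun j hj => hfg' j (Finset.mem_insert_of_mem hj))
      (fun j hj => hff j (Finset.mem_insert_of_mem hj))
    have hii := Finset.mem_insert_self i s
    have hS : (∑ k ∈ insert i s, d k * ∏ j ∈ (insert i s).erase k, g j) =
        d i * (∏ j ∈ s, g j) + g i * ∑ k ∈ s, d k * ∏ j ∈ s.erase k, g j := by
      rw [Finset.sum_insert hi, Finset.erase_insert hi, Finset.mul_sum]
      congr 1
      apply Finset.sum_congr rfl
      intro k hk
      have hne : i ≠ k := fun h => hi (h ▸ hk)
      rw [Finset.erase_insert_of_ne hne,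
        Finset.prod_insert (fun h => hi (Finset.mem_of_mem_erase h))]
      ring
    rw [hS, Finset.prod_insert hi, Finset.prod_insert hi, Finset.prod_insert hi,
      Finset.card_insert_of_notMem hi]
    generalize (∏ i ∈ s, f i) = F at *
    generalize (∏ i ∈ s, f' i) = F' at *
    generalize (∏ i ∈ s, g i) = G at *
    generalize (∑ k ∈ s, d k * ∏ j ∈ s.erase k, g j) = S at *
    refine ⟨aux_mul_mem (hf i hii) h1 (by omega), aux_mul_mem (hf' i hii) h2 (by omega),
      aux_mul_mem (hg i hii) h3 (by omega), ?_, ?_, ?_⟩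
    · have e : f i * F - g i * G = (f i - g i) * F + g i * (F - G) := by ring
      rw [e]
      exact add_mem (aux_mul_mem (hfg i hii) h1 (by omega))
        (aux_mul_mem (hg i hii) h4 (by omega))
    · exact add_mem (aux_mul_mem (hd i hii) h3 (by omega))
        (aux_mul_mem (hg i hii) h5 (by omega))
    · have e : f i * F - f' i * F' - (d i * G + g i * S) =
          (f i - f' i - d i) * F + d i * (F - G) + f' i * (F - F' - S)
            + (f' i - g i) * S := by ring
      rw [e]
      exact add_mem (add_mem (add_mem (aux_mul_mem (hff i hii) h1 (by omega))
        (aux_mul_mem (hd i hii) h4 (by omega))) (aux_mul_mem (hf' i hii) h6 (by omega)))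
        (aux_mul_mem (hfg' i hii) h5 (by omega))

lemma aux_hom_mem {f : MvPolynomial (Fin 2) ℂ} {n k : ℕ} (h : f.IsHomogeneous n)
    (hk : k ≤ n) : f ∈ idealOfVars (Fin 2) ℂ ^ k := by
  rw [mem_pow_idealOfVars_iff]
  intro x hx
  have := h.degree_eq_sum_deg_support hx
  rw [Finsupp.degree_apply]
  omega

lemma aux_comp {f g : MvPolynomial (Fin 2) ℂ} {n : ℕ} (h : g.IsHomogeneous n)
    (hfg : f - g ∈ idealOfVars (Fin 2) ℂ ^ (n + 1)) : homogeneousComponent n f = g := by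
  have h0 : homogeneousComponent n (f - g) = 0 := by
    ext x
    rw [coeff_homogeneousComponent, coeff_zero]
    split_ifs with hx
    · by_contra hc
      have := (mem_pow_idealOfVars_iff _ _).1 hfg x (mem_support_iff.2 hc)
      omega
    · rfl
  rw [map_sub, homogeneousComponent_eq_self h, sub_eq_zero] at h0
  exact h0

lemma aux_homA (c : ℂ) (k : ℕ) (hk : 1 ≤ k) :
    (C c * X 0 * X 1 ^ (k - 1) : MvPolynomial (Fin 2) ℂ).IsHomogeneous k := by
  have := (((isHomogeneous_C (Fin 2) c).mul (isHomogeneous_X ℂ (0 : Fin 2))).mul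
    ((isHomogeneous_X ℂ (1 : Fin 2)).pow (k - 1)))
  convert this using 1
  omega

lemma aux_homB (c : ℂ) (k : ℕ) :
    (C c * X 0 ^ (k + 1) : MvPolynomial (Fin 2) ℂ).IsHomogeneous (k + 1) := by
  have := ((isHomogeneous_C (Fin 2) c).mul ((isHomogeneous_X ℂ (0 : Fin 2)).pow (k + 1)))
  convert this using 1
  omega

lemma aux_X (i : Fin 2) : (X i : MvPolynomial (Fin 2) ℂ) ∈ idealOfVars (Fin 2) ℂ ^ 1 :=
  aux_hom_mem (isHomogeneous_X ℂ i) le_rfl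

lemma aux_A1 (a : ℕ → ℂ) (i : ℕ) (hi : 1 ≤ i) :
    ((X 1 + ∑ k ∈ Finset.Icc 1 i, C (a k) * X 0 * X 1 ^ (k - 1)) - (X 1 + C (a 1) * X 0) :
      MvPolynomial (Fin 2) ℂ) ∈ idealOfVars (Fin 2) ℂ ^ 2 := by
  have e : (C (a 1) * X 0 : MvPolynomial (Fin 2) ℂ) =
      ∑ k ∈ Finset.Icc 1 i, if k = 1 then C (a k) * X 0 * X 1 ^ (k - 1) else 0 := by
    rw [Finset.sum_ite_eq']
    simp [hi]
  rw [e, add_sub_add_left_eq_sub, ← Finset.sum_sub_distrib]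
  apply sum_mem
  intro k hk
  rw [Finset.mem_Icc] at hk
  split_ifs with h
  · simp
  · rw [sub_zero]
    exact aux_hom_mem (aux_homA _ k hk.1) (by omega)

lemma aux_g (c : ℂ) : (X 1 + C c * X 0 : MvPolynomial (Fin 2) ℂ).IsHomogeneous 1 := by
  have := aux_homA c 1 le_rfl
  simp only [le_refl, tsub_eq_zero_of_le, pow_zero, mul_one] at this
  exact (isHomogeneous_X ℂ (1 : Fin 2)).add this

lemma aux_of_sub {R : Type*} [CommRing R] {I : Ideal R} {f g : R}
    (h : f - g ∈ I ^ 2) (hg : g ∈ I ^ 1) : f ∈ I ^ 1 := by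
  have := add_mem (Ideal.pow_le_pow_right (by norm_num : 1 ≤ 2) h) hg
  simpa using this

lemma aux_A2 (a a' : ℕ → ℂ) (i l : ℕ)
    (h : ∀ k ∈ Finset.Icc 1 i, k ≤ l → a k = a' k) :
    ((X 1 + ∑ k ∈ Finset.Icc 1 i, C (a k) * X 0 * X 1 ^ (k - 1)) -
      (X 1 + ∑ k ∈ Finset.Icc 1 i, C (a' k) * X 0 * X 1 ^ (k - 1)) -
      (if l + 1 ≤ i then C (a (l + 1) - a' (l + 1)) * X 0 * X 1 ^ l else 0) :
      MvPolynomial (Fin 2) ℂ) ∈ idealOfVars (Fin 2) ℂ ^ (l + 2) := by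
  have e : (if l + 1 ≤ i then C (a (l + 1) - a' (l + 1)) * X 0 * X 1 ^ l else 0 :
      MvPolynomial (Fin 2) ℂ) =
      ∑ k ∈ Finset.Icc 1 i,
        if k = l + 1 then C (a k - a' k) * X 0 * X 1 ^ (k - 1) else 0 := by
    rw [Finset.sum_ite_eq']
    simp
  rw [e, add_sub_add_left_eq_sub, ← Finset.sum_sub_distrib, ← Finset.sum_sub_distrib]
  apply sum_mem
  intro k hk
  have hk' := Finset.mem_Icc.1 hk
  have e2 : (C (a k) * X 0 * X 1 ^ (k - 1) - C (a' k) * X 0 * X 1 ^ (k - 1) :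
      MvPolynomial (Fin 2) ℂ) = C (a k - a' k) * X 0 * X 1 ^ (k - 1) := by
    rw [map_sub]; ring
  rw [e2]
  split_ifs with h1
  · simp
  · rw [sub_zero]
    by_cases h2 : k ≤ l
    · rw [h k hk h2]; simp
    · exact aux_hom_mem (aux_homA _ k hk'.1) (by omega)

lemma aux_B1 (b : ℕ → ℂ) (i : ℕ) :
    ((X 1 + ∑ k ∈ Finset.Icc 1 i, C (b k) * X 0 ^ (k + 1)) - X 1 :
      MvPolynomial (Fin 2) ℂ) ∈ idealOfVars (Fin 2) ℂ ^ 2 := by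
  rw [add_sub_cancel_left]
  apply sum_mem
  intro k hk
  rw [Finset.mem_Icc] at hk
  exact aux_hom_mem (aux_homB _ k) (by omega)

lemma aux_B2 (b b' : ℕ → ℂ) (i l : ℕ)
    (h : ∀ k ∈ Finset.Icc 1 i, k ≤ l → b k = b' k) :
    ((X 1 + ∑ k ∈ Finset.Icc 1 i, C (b k) * X 0 ^ (k + 1)) -
      (X 1 + ∑ k ∈ Finset.Icc 1 i, C (b' k) * X 0 ^ (k + 1)) - 0 :
      MvPolynomial (Fin 2) ℂ) ∈ idealOfVars (Fin 2) ℂ ^ (l + 2) := by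
  rw [sub_zero, add_sub_add_left_eq_sub, ← Finset.sum_sub_distrib]
  apply sum_mem
  intro k hk
  rw [← sub_mul, ← map_sub]
  by_cases h2 : k ≤ l
  · rw [h k hk h2]; simp
  · exact aux_hom_mem (aux_homB _ k) (by omega)

/-- If the parameters `p` and `q` agree at all levels `k ≤ l`, then the homogeneous
component of total degree `M+N+l` of `N_p - N_q` is
`x²·y^{M+l}·Σ_{i=l+1}^{N-1} (a_{l+1,i} - a'_{l+1,i})·∏_{j≠i} (y + a_{1,j} x)`. -/
theorem stmt_12 (M N : ℕ) (hM : 2 ≤ M) (hN : 2 ≤ N) (l : ℕ) (hl1 : 1 ≤ l) (hl2 : l ≤ N - 2)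
    (a b a' b' : ℕ → ℕ → ℂ)
    (ha : ∀ i ∈ Finset.Icc 1 (N - 1), ∀ k ∈ Finset.Icc 1 i, k ≤ l → a k i = a' k i)
    (hb : ∀ i ∈ Finset.Icc 1 (M - 2), ∀ k ∈ Finset.Icc 1 (N - 1 + 2 * i), k ≤ l →
      b k i = b' k i) :
    homogeneousComponent (M + N + l) (Npoly M N a b - Npoly M N a' b') =
      X 0 ^ 2 * X 1 ^ (M + l) *
        ∑ i ∈ Finset.Icc (l + 1) (N - 1), C (a (l + 1) i - a' (l + 1) i) *
          ∏ j ∈ (Finset.Icc 1 (N - 1)).erase i, (X 1 + C (a 1 j) * X 0) := by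
  have hA := aux_prod (idealOfVars (Fin 2) ℂ) l (Finset.Icc 1 (N - 1))
    (fun i => X 1 + ∑ k ∈ Finset.Icc 1 i, C (a k i) * X 0 * X 1 ^ (k - 1))
    (fun i => X 1 + ∑ k ∈ Finset.Icc 1 i, C (a' k i) * X 0 * X 1 ^ (k - 1))
    (fun i => X 1 + C (a 1 i) * X 0)
    (fun i => if l + 1 ≤ i then C (a (l + 1) i - a' (l + 1) i) * X 0 * X 1 ^ l else 0)
  have hg : ∀ c : ℂ, (X 1 + C c * X 0 : MvPolynomial (Fin 2) ℂ) ∈ idealOfVars (Fin 2) ℂ ^ 1 :=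
    fun c => aux_hom_mem (aux_g c) le_rfl
  have h1 : ∀ i ∈ Finset.Icc 1 (N - 1),
      ((X 1 + ∑ k ∈ Finset.Icc 1 i, C (a k i) * X 0 * X 1 ^ (k - 1)) -
        (X 1 + C (a 1 i) * X 0) : MvPolynomial (Fin 2) ℂ) ∈ idealOfVars (Fin 2) ℂ ^ 2 :=
    fun i hi => aux_A1 (fun k => a k i) i (Finset.mem_Icc.1 hi).1
  have h1' : ∀ i ∈ Finset.Icc 1 (N - 1),
      ((X 1 + ∑ k ∈ Finset.Icc 1 i, C (a' k i) * X 0 * X 1 ^ (k - 1)) -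
        (X 1 + C (a 1 i) * X 0) : MvPolynomial (Fin 2) ℂ) ∈ idealOfVars (Fin 2) ℂ ^ 2 := by
    intro i hi
    have hi1 := (Finset.mem_Icc.1 hi).1
    rw [ha i hi 1 (Finset.mem_Icc.2 ⟨le_rfl, hi1⟩) hl1]
    exact aux_A1 (fun k => a' k i) i hi1
  obtain ⟨-, hP', -, -, hD, hPD⟩ := hA (fun i hi => aux_of_sub (h1 i hi) (hg _))
    (fun i hi => aux_of_sub (h1' i hi) (hg _)) (fun i hi => hg _)
    (fun i hi => by
      split_ifs
      · exact aux_hom_mem (aux_homA _ (l + 1) (by omega)) le_rfl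
      · exact zero_mem _) h1 h1'
    (fun i hi => aux_A2 (fun k => a k i) (fun k => a' k i) i l (ha i hi))
  obtain ⟨hQ, -, -, hQy, -, hQQ⟩ := aux_prod (idealOfVars (Fin 2) ℂ) l (Finset.Icc 1 (M - 2))
    (fun i => X 1 + ∑ k ∈ Finset.Icc 1 (N - 1 + 2 * i), C (b k i) * X 0 ^ (k + 1))
    (fun i => X 1 + ∑ k ∈ Finset.Icc 1 (N - 1 + 2 * i), C (b' k i) * X 0 ^ (k + 1))
    (fun i => X 1) (fun i => 0)
    (fun i hi => aux_of_sub (aux_B1 (fun k => b k i) _) (aux_X 1))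
    (fun i hi => aux_of_sub (aux_B1 (fun k => b' k i) _) (aux_X 1))
    (fun i hi => aux_X 1) (fun i hi => zero_mem _)
    (fun i hi => aux_B1 (fun k => b k i) _) (fun i hi => aux_B1 (fun k => b' k i) _)
    (fun i hi => aux_B2 (fun k => b k i) (fun k => b' k i) _ l (hb i hi))
  have hsum : (∑ i ∈ Finset.Icc 1 (N - 1),
      (if l + 1 ≤ i then C (a (l + 1) i - a' (l + 1) i) * X 0 * X 1 ^ l else 0) *
        ∏ j ∈ (Finset.Icc 1 (N - 1)).erase i, (X 1 + C (a 1 j) * X 0) :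
        MvPolynomial (Fin 2) ℂ) = X 0 * X 1 ^ l *
        ∑ i ∈ Finset.Icc (l + 1) (N - 1), C (a (l + 1) i - a' (l + 1) i) *
          ∏ j ∈ (Finset.Icc 1 (N - 1)).erase i, (X 1 + C (a 1 j) * X 0) := by
    have hs : Finset.Icc (l + 1) (N - 1) =
        (Finset.Icc 1 (N - 1)).filter (fun i => l + 1 ≤ i) := by
      ext i
      simp only [Finset.mem_Icc, Finset.mem_filter]
      omega
    rw [hs, Finset.sum_filter, Finset.mul_sum]
    apply Finset.sum_congr rfl
    intro i hi
    split_ifs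
    · ring
    · ring
  have hT : (∑ i ∈ Finset.Icc (l + 1) (N - 1), C (a (l + 1) i - a' (l + 1) i) *
          ∏ j ∈ (Finset.Icc 1 (N - 1)).erase i, (X 1 + C (a 1 j) * X 0) :
          MvPolynomial (Fin 2) ℂ).IsHomogeneous (N - 2) := by
    apply IsHomogeneous.sum
    intro i hi
    have hi' : i ∈ Finset.Icc 1 (N - 1) := by
      rw [Finset.mem_Icc] at *
      omega
    have := (isHomogeneous_C (Fin 2) (a (l + 1) i - a' (l + 1) i)).mul
      (IsHomogeneous.prod ((Finset.Icc 1 (N - 1)).erase i)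
        (fun j => (X 1 + C (a 1 j) * X 0 : MvPolynomial (Fin 2) ℂ)) (fun _ => 1)
        (fun j _ => aux_g (a 1 j)))
    convert this using 1
    simp [Finset.card_erase_of_mem hi']
    omega
  simp only [Finset.sum_const_zero, zero_mul, sub_zero, Finset.prod_const, Nat.card_Icc,
    Nat.add_sub_cancel] at hP' hD hPD hQ hQy hQQ
  rw [hsum] at hD hPD
  have hx := isHomogeneous_X ℂ (0 : Fin 2)
  have hy := isHomogeneous_X ℂ (1 : Fin 2)
  unfold Npoly
  generalize (∑ i ∈ Finset.Icc (l + 1) (N - 1), C (a (l + 1) i - a' (l + 1) i) *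
          ∏ j ∈ (Finset.Icc 1 (N - 1)).erase i, (X 1 + C (a 1 j) * X 0) :
          MvPolynomial (Fin 2) ℂ) = T at *
  generalize (∏ i ∈ Finset.Icc 1 (N - 1),
      (X 1 + ∑ k ∈ Finset.Icc 1 i, C (a k i) * X 0 * X 1 ^ (k - 1)) :
      MvPolynomial (Fin 2) ℂ) = P at *
  generalize (∏ i ∈ Finset.Icc 1 (N - 1),
      (X 1 + ∑ k ∈ Finset.Icc 1 i, C (a' k i) * X 0 * X 1 ^ (k - 1)) :
      MvPolynomial (Fin 2) ℂ) = P' at *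
  generalize (∏ i ∈ Finset.Icc 1 (M - 2),
      (X 1 + ∑ k ∈ Finset.Icc 1 (N - 1 + 2 * i), C (b k i) * X 0 ^ (k + 1)) :
      MvPolynomial (Fin 2) ℂ) = Q at *
  generalize (∏ i ∈ Finset.Icc 1 (M - 2),
      (X 1 + ∑ k ∈ Finset.Icc 1 (N - 1 + 2 * i), C (b' k i) * X 0 ^ (k + 1)) :
      MvPolynomial (Fin 2) ℂ) = Q' at *
  obtain ⟨m, rfl⟩ : ∃ m, M = m + 2 := ⟨M - 2, by omega⟩
  obtain ⟨n, rfl⟩ : ∃ n, N = n + 2 := ⟨N - 2, by omega⟩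
  have e1 : n + 2 - 1 = n + 1 := by omega
  have e2 : n + 2 - 2 = n := by omega
  have e3 : m + 2 - 2 = m := by omega
  rw [e1] at hP' hD hPD
  rw [e2] at hT
  rw [e3] at hQ hQy hQQ
  apply aux_comp
  · have := ((hx.pow 2).mul (hy.pow (m + 2 + l))).mul hT
    convert this using 1
    omega
  have hc0 : (X 0 * X 1 * X 0 ^ 2 : MvPolynomial (Fin 2) ℂ) ∈ idealOfVars (Fin 2) ℂ ^ 4 :=
    aux_hom_mem ((hx.mul hy).mul (hx.pow 2)) (by norm_num)
  have hc : (X 0 * X 1 * (X 1 + X 0 ^ 2) : MvPolynomial (Fin 2) ℂ)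
      ∈ idealOfVars (Fin 2) ℂ ^ 3 := by
    rw [mul_add]
    exact add_mem (aux_hom_mem ((hx.mul hy).mul hy) (by norm_num))
      (Ideal.pow_le_pow_right (by norm_num) hc0)
  have hym : (X 1 ^ m : MvPolynomial (Fin 2) ℂ) ∈ idealOfVars (Fin 2) ℂ ^ m :=
    aux_hom_mem (hy.pow m) (by omega)
  have e : (X 0 * X 1 * (X 1 + X 0 ^ 2) * P * Q - X 0 * X 1 * (X 1 + X 0 ^ 2) * P' * Q' -
      X 0 ^ 2 * X 1 ^ (m + 2 + l) * T : MvPolynomial (Fin 2) ℂ) =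
      (X 0 * X 1 * (X 1 + X 0 ^ 2)) * ((P - P' - X 0 * X 1 ^ l * T) * Q) +
      (X 0 * X 1 * (X 1 + X 0 ^ 2)) * (P' * (Q - Q')) +
      (X 0 * X 1 * (X 1 + X 0 ^ 2)) * ((X 0 * X 1 ^ l * T) * (Q - X 1 ^ m)) +
      (X 0 * X 1 * X 0 ^ 2) * ((X 0 * X 1 ^ l * T) * X 1 ^ m) := by
    ring
  rw [e]
  refine add_mem (add_mem (add_mem ?_ ?_) ?_) ?_
  · exact aux_mul_mem hc (aux_mul_mem hPD hQ le_rfl) (by omega)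
  · exact aux_mul_mem hc (aux_mul_mem hP' hQQ le_rfl) (by omega)
  · exact aux_mul_mem hc (aux_mul_mem hD hQy le_rfl) (by omega)
  · exact aux_mul_mem hc0 (aux_mul_mem hD hym le_rfl) (by omega)
end

section
/- Let M ≥ 2 and N ≥ 2 be integers and let a₁,…,a_{N−1} be pairwise distinct nonzero complex numbers. Define κ_i = (−1)^{N}·a_i^{N−1}/∏_{j≠i}(1 − a_j/a_i) and β = 1/((2M+N)·∏_{j=1}^{N−1} a_j). Let M₁ be the (N−1)×(N−1) complex matrix whose (j,i) entry is m_{ji} = (−1)^{N+j}·κ_i/((M+N)·a_i^{N+j}) for 1 ≤ j ≤ N−2, and whose last row is m_{(N−1)i} = (1/(M+N))·(−κ_i/a_i^{2N−1} − β/a_i). Then det(M₁) = ((−1)^{N²−1}/(M+N)^{N−1})·((2M+2N−1)/(2M+N))·∏_{i=1}^{N−1}(κ_i/a_i^{N+1})·∏_{1≤i<j≤N−1}(1/a_i − 1/a_j). In particular M₁ is invertible. -/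
open Polynomial in
theorem aux_det (k : ℕ) (a : Fin (k + 1) → ℂ) (ha0 : ∀ i, a i ≠ 0) (g : ℂ)
    (W : Matrix (Fin (k + 1)) (Fin (k + 1)) ℂ)
    (hW : ∀ j i, W j i = (a i)⁻¹ ^ (j : ℕ) + if (j : ℕ) = k then
      g * (a i * ∏ l ∈ Finset.univ.erase i, (1 - a l / a i)) else 0) :
    W.det = (1 + g * ((-1) ^ k * (k + 1) * ∏ l, a l)) *
      (Matrix.vandermonde (fun i => (a i)⁻¹)).det := by
  classical
  set P : ℂ[X] := ∏ l, (1 - C (a l) * X) with hP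
  have hdeg1 : ∀ l, (1 - C (a l) * X : ℂ[X]).natDegree ≤ 1 := by
    intro l; compute_degree
  have hPdeg : P.natDegree ≤ k + 1 := by
    refine (natDegree_prod_le _ _).trans ?_
    refine (Finset.sum_le_sum (fun l _ => hdeg1 l)).trans ?_
    simp
  have hPcoeff : P.coeff (k + 1) = (-1) ^ (k + 1) * ∏ l, a l := by
    have h := coeff_prod_of_natDegree_le (s := Finset.univ)
      (f := fun l => (1 - C (a l) * X : ℂ[X])) (n := 1) (fun l _ => hdeg1 l)
    simp only [Finset.card_univ, Fintype.card_fin, mul_one] at h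
    rw [hP, h]
    have : ∀ l, (1 - C (a l) * X : ℂ[X]).coeff 1 = -1 * a l := by
      intro l; simp [coeff_one]
    rw [Finset.prod_congr rfl (fun l _ => this l), Finset.prod_mul_distrib]
    simp
  have hPeval : ∀ i, (derivative P).eval (a i)⁻¹ =
      - (a i * ∏ l ∈ Finset.univ.erase i, (1 - a l / a i)) := by
    intro i
    have h1 : P = (1 - C (a i) * X) * ∏ l ∈ Finset.univ.erase i, (1 - C (a l) * X) := by
      exact (Finset.mul_prod_erase _ (fun l => (1 - C (a l) * X : ℂ[X])) (Finset.mem_univ i)).symm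
    rw [h1, derivative_mul]
    simp [eval_prod, ha0 i, div_eq_mul_inv]
  let p : Fin (k + 1) → ℂ[X] := fun j =>
    X ^ (j : ℕ) + if (j : ℕ) = k then - (C g * derivative P) else 0
  have hp : ∀ j, (p j).natDegree ≤ j := by
    intro j
    simp only [p]
    split_ifs with h
    · refine natDegree_add_le_of_degree_le (by simp) ?_
      rw [natDegree_neg]
      refine (natDegree_C_mul_le _ _).trans ?_
      refine (natDegree_derivative_le _).trans ?_
      omega
    · simp
  have hT : W.transpose = Matrix.of (fun i j => (p j).eval (a i)⁻¹) := by
    ext i j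
    simp only [Matrix.transpose_apply, Matrix.of_apply, hW, p]
    split_ifs
    · simp [hPeval]
    · simp
  rw [← Matrix.det_transpose, hT,
    Matrix.eval_matrixOfPolynomials_eq_vandermonde_mul_matrixOfPolynomials _ p hp,
    Matrix.det_mul, mul_comm]
  congr 1
  rw [Matrix.det_of_upperTriangular]
  · rw [Fin.prod_univ_castSucc, Finset.prod_eq_one, one_mul]
    · simp only [Matrix.of_apply, p, Fin.val_last, if_true, coeff_add, coeff_neg, coeff_C_mul,
        coeff_derivative, hPcoeff]
      rw [coeff_X_pow, if_pos rfl]; ring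
    · intro i _
      have : (i : ℕ) ≠ k := i.2.ne
      simp [p, this]
  · intro i j hij
    exact coeff_eq_zero_of_natDegree_lt ((hp j).trans_lt hij)

theorem aux_vand (n : ℕ) (x : Fin n → ℂ) :
    (Matrix.vandermonde x).det = (∏ j : Fin n, (-1 : ℂ) ^ (j : ℕ)) *
      ∏ p ∈ Finset.univ.filter (fun p : Fin n × Fin n => p.1 < p.2), (x p.1 - x p.2) := by
  have key : ∀ f : Fin n → Fin n → ℂ,
      ∏ p ∈ Finset.univ.filter (fun p : Fin n × Fin n => p.1 < p.2), f p.1 p.2 =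
      ∏ i, ∏ j ∈ Finset.Ioi i, f i j := by
    intro f
    rw [Finset.prod_filter, Fintype.prod_prod_type]
    refine Finset.prod_congr rfl fun i _ => ?_
    rw [← Finset.prod_filter]
    refine Finset.prod_congr ?_ fun _ _ => rfl
    ext; simp
  have key2 : ∏ p ∈ Finset.univ.filter (fun p : Fin n × Fin n => p.1 < p.2), (-1 : ℂ) =
      ∏ j : Fin n, (-1 : ℂ) ^ (j : ℕ) := by
    rw [Finset.prod_filter, Fintype.prod_prod_type_right]
    refine Finset.prod_congr rfl fun i _ => ?_
    rw [← Finset.prod_filter, Finset.prod_const]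
    congr 1
    rw [← Fin.card_Iio i]
    congr 1
    ext; simp
  rw [Matrix.det_vandermonde, ← key (fun i j => x j - x i), ← key2, ← Finset.prod_mul_distrib]
  refine Finset.prod_congr rfl fun p _ => ?_
  ring

theorem aux_main (M k : ℕ) (a : Fin (k + 1) → ℂ)
    (ha0 : ∀ i, a i ≠ 0) (hainj : Function.Injective a)
    (κ : Fin (k + 1) → ℂ)
    (hκ : ∀ i, κ i = (-1 : ℂ) ^ (k + 2) * a i ^ (k + 1) /
      ∏ j ∈ Finset.univ.erase i, (1 - a j / a i))
    (β : ℂ) (hβ : β = 1 / ((2 * M + (k + 2 : ℕ) : ℂ) * ∏ j, a j))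
    (M₁ : Matrix (Fin (k + 1)) (Fin (k + 1)) ℂ)
    (hM₁ : ∀ j i, M₁ j i =
      if (j : ℕ) + 1 ≤ k then
        (-1 : ℂ) ^ (k + 2 + ((j : ℕ) + 1)) * κ i /
          ((M + (k + 2 : ℕ) : ℂ) * a i ^ (k + 2 + ((j : ℕ) + 1)))
      else (1 / (M + (k + 2 : ℕ) : ℂ)) * (-κ i / a i ^ (2 * (k + 2) - 1) - β / a i)) :
    M₁.det =
        ((-1 : ℂ) ^ ((k + 2) ^ 2 - 1) / (M + (k + 2 : ℕ) : ℂ) ^ (k + 1)) *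
          ((2 * M + 2 * (k + 2 : ℕ) - 1 : ℂ) / (2 * M + (k + 2 : ℕ) : ℂ)) *
          (∏ i, κ i / a i ^ (k + 2 + 1)) *
          (∏ p ∈ Finset.univ.filter (fun p : Fin (k + 1) × Fin (k + 1) => p.1 < p.2),
            (1 / a p.1 - 1 / a p.2)) ∧
      IsUnit M₁ := by
  have hQ : ∀ i, ∏ j ∈ Finset.univ.erase i, (1 - a j / a i) ≠ 0 := by
    intro i
    rw [Finset.prod_ne_zero_iff]
    intro j hj h
    have h2 : a j / a i = 1 := (sub_eq_zero.mp h).symm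
    rw [div_eq_one_iff_eq (ha0 i)] at h2
    exact (Finset.ne_of_mem_erase hj) (hainj h2)
  have hκ0 : ∀ i, κ i ≠ 0 := by
    intro i
    rw [hκ]
    exact div_ne_zero (mul_ne_zero (pow_ne_zero _ (by norm_num)) (pow_ne_zero _ (ha0 i))) (hQ i)
  have hA : ∏ j, a j ≠ 0 := Finset.prod_ne_zero_iff.mpr fun i _ => ha0 i
  have hD : (M + (k + 2 : ℕ) : ℂ) ≠ 0 := by
    have : M + (k + 2) ≠ 0 := by omega
    exact_mod_cast this
  have hE : (2 * M + (k + 2 : ℕ) : ℂ) ≠ 0 := by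
    have : 2 * M + (k + 2) ≠ 0 := by omega
    exact_mod_cast this
  have hF : (2 * M + 2 * (k + 2 : ℕ) - 1 : ℂ) ≠ 0 := by
    have : 2 * M + 2 * k + 3 ≠ 0 := by omega
    have h2 : ((2 * M + 2 * k + 3 : ℕ) : ℂ) ≠ 0 := by exact_mod_cast this
    intro h
    apply h2
    push_cast at h ⊢
    linear_combination h
  have hsq : ∀ n : ℕ, (-1 : ℂ) ^ n * (-1) ^ n = 1 := by
    intro n; rw [← mul_pow]; norm_num
  let W : Matrix (Fin (k + 1)) (Fin (k + 1)) ℂ := fun j i =>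
    (a i)⁻¹ ^ (j : ℕ) + if (j : ℕ) = k then
      ((-1) ^ k * β) * (a i * ∏ l ∈ Finset.univ.erase i, (1 - a l / a i)) else 0
  have hWdet := aux_det k a ha0 ((-1) ^ k * β) W (fun _ _ => rfl)
  have hfac : M₁ = Matrix.diagonal (fun j : Fin (k + 1) =>
        (-1 : ℂ) ^ (k + 3) * (-1) ^ (j : ℕ) / (M + (k + 2 : ℕ) : ℂ)) * W *
      Matrix.diagonal (fun i => κ i / a i ^ (k + 2 + 1)) := by
    ext j i
    rw [Matrix.mul_diagonal, Matrix.diagonal_mul, hM₁]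
    have hai := ha0 i
    by_cases h : (j : ℕ) = k
    · have h1 : ¬ ((j : ℕ) + 1 ≤ k) := by omega
      have h2 : 2 * (k + 2) - 1 = k + (k + 2 + 1) := by omega
      have e : κ i * (a i * ∏ l ∈ Finset.univ.erase i, (1 - a l / a i)) =
          (-1) ^ k * a i ^ (k + 2) := by
        rw [hκ]
        have hq := hQ i
        generalize ∏ l ∈ Finset.univ.erase i, (1 - a l / a i) = q at hq ⊢
        field_simp
        ring
      have e2 : β / a i = (-1) ^ k * β * (κ i * (a i * ∏ l ∈ Finset.univ.erase i, (1 - a l / a i)))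
          / a i ^ (k + 2 + 1) := by
        rw [e]
        rw [show (-1 : ℂ) ^ k * β * ((-1) ^ k * a i ^ (k + 2)) =
          ((-1 : ℂ) ^ k * (-1) ^ k) * β * a i ^ (k + 2) by ring, hsq]
        field_simp
        ring
      have e3 : (-1 : ℂ) ^ (k + 3) * (-1) ^ k = -1 := by
        rw [pow_add, mul_right_comm, hsq]; norm_num
      simp only [W, h, if_true]
      rw [if_neg (by omega), h2, e2, e3, pow_add (a i) k (k + 2 + 1), inv_pow]
      field_simp
      ring
    · have h1 : (j : ℕ) + 1 ≤ k := by omega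
      simp only [W, h, if_false, if_pos h1]
      rw [show k + 2 + ((j : ℕ) + 1) = k + 3 + j by omega, pow_add (a i), pow_add (-1 : ℂ) (k + 3),
        inv_pow]
      field_simp
      ring
  have hdet : M₁.det =
        ((-1 : ℂ) ^ ((k + 2) ^ 2 - 1) / (M + (k + 2 : ℕ) : ℂ) ^ (k + 1)) *
          ((2 * M + 2 * (k + 2 : ℕ) - 1 : ℂ) / (2 * M + (k + 2 : ℕ) : ℂ)) *
          (∏ i, κ i / a i ^ (k + 2 + 1)) *
          (∏ p ∈ Finset.univ.filter (fun p : Fin (k + 1) × Fin (k + 1) => p.1 < p.2),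
            (1 / a p.1 - 1 / a p.2)) := by
    have hc : 1 + (-1) ^ k * β * ((-1) ^ k * (k + 1) * ∏ l, a l) =
        ((2 * M + 2 * (k + 2 : ℕ) - 1 : ℂ) / (2 * M + (k + 2 : ℕ) : ℂ)) := by
      rw [show (-1) ^ k * β * ((-1) ^ k * (k + 1) * ∏ l, a l) =
        ((-1) ^ k * (-1) ^ k) * (β * (k + 1) * ∏ l, a l) by ring, hsq, hβ]
      field_simp
      push_cast
      ring
    have hS : (∏ j : Fin (k + 1), (-1 : ℂ) ^ (j : ℕ)) * (∏ j : Fin (k + 1), (-1 : ℂ) ^ (j : ℕ)) = 1 := by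
      rw [← Finset.prod_mul_distrib]
      exact Finset.prod_eq_one fun j _ => hsq j
    have hN : (k + 2) ^ 2 - 1 = (k + 3) * (k + 1) := by
      rw [show (k + 2) ^ 2 = (k + 3) * (k + 1) + 1 by ring]; rfl
    rw [hfac, Matrix.det_mul, Matrix.det_mul, Matrix.det_diagonal, Matrix.det_diagonal, hWdet, hc,
      aux_vand, Finset.prod_div_distrib, Finset.prod_mul_distrib, hN, pow_mul]
    simp only [Finset.prod_const, Finset.card_univ, Fintype.card_fin, one_div]
    linear_combination (((-1 : ℂ) ^ (k + 3)) ^ (k + 1) / (M + (k + 2 : ℕ) : ℂ) ^ (k + 1)) *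
          ((2 * M + 2 * (k + 2 : ℕ) - 1 : ℂ) / (2 * M + (k + 2 : ℕ) : ℂ)) *
          (∏ i, κ i / a i ^ (k + 2 + 1)) *
          (∏ p ∈ Finset.univ.filter (fun p : Fin (k + 1) × Fin (k + 1) => p.1 < p.2),
            ((a p.1)⁻¹ - (a p.2)⁻¹)) * hS
  refine ⟨hdet, ?_⟩
  rw [Matrix.isUnit_iff_isUnit_det, isUnit_iff_ne_zero, hdet]
  refine mul_ne_zero (mul_ne_zero (mul_ne_zero ?_ (div_ne_zero hF hE)) ?_) ?_
  · exact div_ne_zero (pow_ne_zero _ (by norm_num)) (pow_ne_zero _ hD)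
  · exact Finset.prod_ne_zero_iff.mpr fun i _ => div_ne_zero (hκ0 i) (pow_ne_zero _ (ha0 i))
  · refine Finset.prod_ne_zero_iff.mpr fun p hp h => ?_
    have hlt := (Finset.mem_filter.mp hp).2
    rw [one_div, one_div, sub_eq_zero, inv_inj] at h
    exact hlt.ne (hainj h)


/-- The matrix `M₁` of the paper: rows `j = 1, …, N-2` have entries
`(-1)^{N+j}·κ_i/((M+N)·a_i^{N+j})` and the last row `j = N-1` has entries
`(1/(M+N))·(-κ_i/a_i^{2N-1} - β/a_i)`, where
`κ_i = (-1)^N·a_i^{N-1}/∏_{j≠i}(1 - a_j/a_i)` and `β = 1/((2M+N)·∏ a_j)`.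
Its determinant is
`((-1)^{N²-1}/(M+N)^{N-1})·((2M+2N-1)/(2M+N))·∏ κ_i/a_i^{N+1}·∏_{i<j}(1/a_i - 1/a_j)`;
in particular `M₁` is invertible. -/
theorem stmt_16 (M N : ℕ) (hM : 2 ≤ M) (hN : 2 ≤ N) (a : Fin (N - 1) → ℂ)
    (ha0 : ∀ i, a i ≠ 0) (hainj : Function.Injective a)
    (κ : Fin (N - 1) → ℂ)
    (hκ : ∀ i, κ i = (-1 : ℂ) ^ N * a i ^ (N - 1) /
      ∏ j ∈ Finset.univ.erase i, (1 - a j / a i))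
    (β : ℂ) (hβ : β = 1 / ((2 * M + N : ℂ) * ∏ j, a j))
    (M₁ : Matrix (Fin (N - 1)) (Fin (N - 1)) ℂ)
    (hM₁ : ∀ j i, M₁ j i =
      if (j : ℕ) + 1 ≤ N - 2 then
        (-1 : ℂ) ^ (N + ((j : ℕ) + 1)) * κ i / ((M + N : ℂ) * a i ^ (N + ((j : ℕ) + 1)))
      else (1 / (M + N : ℂ)) * (-κ i / a i ^ (2 * N - 1) - β / a i)) :
    M₁.det =
        ((-1 : ℂ) ^ (N ^ 2 - 1) / (M + N : ℂ) ^ (N - 1)) *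
          ((2 * M + 2 * N - 1 : ℂ) / (2 * M + N : ℂ)) *
          (∏ i, κ i / a i ^ (N + 1)) *
          (∏ p ∈ Finset.univ.filter (fun p : Fin (N - 1) × Fin (N - 1) => p.1 < p.2),
            (1 / a p.1 - 1 / a p.2)) ∧
      IsUnit M₁ := by
  obtain ⟨k, rfl⟩ : ∃ k, N = k + 2 := ⟨N - 2, by omega⟩
  exact aux_main M k a ha0 hainj κ hκ β hβ M₁ hM₁
end
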